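/- Under Assumption 1, for every true density 𝐬∈𝕃 of X and every ξ>0, there exists a measurable event Ω_ξ with P_𝐬(Ω_ξ) ≥ 1−e^{−ξ} such that for all ω∈Ω_ξ: the map 𝐭↦Ψ(X(ω),𝐭,𝐭′) is 𝒮-measurable on S̄ for every 𝐭′∈S, and for all 𝐭∈S̄ and 𝐭′∈S, Ψ(X(ω),𝐭,𝐭′) ≤ c₇𝐡²(𝐬,𝐭) − c₈𝐡²(𝐬,𝐭′) + c₅(ε^{S̄}(𝐬))² + c₆(ξ+2.4), with c₅=16·10⁻³, c₆=7·10⁴, c₇=4.01 and c₈=0.365. -/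

import Mathlib

open MeasureTheory Real Filter Set
open scoped Classical ENNReal

noncomputable section

/-- Squared Hellinger distance `h²(p·ν, q·ν) = (1/2)∫(√p−√q)² dν` between two densities
with respect to the reference measure `ν`. -/
def hellSq {X : Type*} [MeasurableSpace X] (ν : Measure X) (p q : X → ℝ) : ℝ :=
  (1 / 2) * ∫ x, (Real.sqrt (p x) - Real.sqrt (q x)) ^ 2 ∂ν

/-- Hellinger-type distance `𝐡` between `n`-tuples of densities:
`𝐡²(𝐭,𝐭′)=Σᵢ h²(tᵢ·μᵢ, tᵢ′·μᵢ)`. -/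
def bH {n : ℕ} {𝒳 : Fin n → Type*} [∀ i, MeasurableSpace (𝒳 i)]
    (μ : ∀ i, Measure (𝒳 i)) (t t' : ∀ i, 𝒳 i → ℝ) : ℝ :=
  Real.sqrt (∑ i, hellSq (μ i) (t i) (t' i))

/-- `ψ(√(b/a))` where `ψ(x)=(x−1)/(x+1)`, `ψ(+∞)=1`, with the conventions
`a/0 = +∞` for `a>0` and `0/0 = 1`. -/
def psiR (a b : ℝ) : ℝ :=
  if a = 0 then (if b = 0 then 0 else 1)
  else (Real.sqrt (b / a) - 1) / (Real.sqrt (b / a) + 1)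

/-- `Ψ(𝐱,𝐭,𝐭′) = Σᵢ ψ(√(tᵢ′(xᵢ)/tᵢ(xᵢ)))`. -/
def Psi {n : ℕ} {𝒳 : Fin n → Type*} (x : ∀ i, 𝒳 i) (t t' : ∀ i, 𝒳 i → ℝ) : ℝ :=
  ∑ i, psiR (t i (x i)) (t' i (x i))

/-- `t` is an `n`-tuple of probability densities with respect to the `μ i`'s, i.e. an
element of `𝕃 = ∏ᵢ ℒᵢ`. -/
def IsDensityT {n : ℕ} {𝒳 : Fin n → Type*} [∀ i, MeasurableSpace (𝒳 i)]
    (μ : ∀ i, Measure (𝒳 i)) (t : ∀ i, 𝒳 i → ℝ) : Prop :=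
  ∀ i, Measurable (t i) ∧ (∀ x, 0 ≤ t i x) ∧
    ∫⁻ x, ENNReal.ofReal (t i x) ∂(μ i) = 1

/-- The law `P_𝐬 = ⊗ᵢ (sᵢ·μᵢ)` of `X=(X₁,…,Xₙ)`. -/
def Plaw {n : ℕ} {𝒳 : Fin n → Type*} [∀ i, MeasurableSpace (𝒳 i)]
    (μ : ∀ i, Measure (𝒳 i)) (s : ∀ i, 𝒳 i → ℝ) : Measure (∀ i, 𝒳 i) :=
  Measure.pi fun i => (μ i).withDensity fun x => ENNReal.ofReal (s i x)

/-- `𝐰^{S̄}(𝐬,y)`: expectation under `P_𝐬` of the supremum of the centred process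
`|Ψ(X,𝐭,𝐭′)−E_𝐬Ψ(X,𝐭,𝐭′)|` over pairs `𝐭,𝐭′` in the Hellinger ball of radius `y`
of the countable set `S`, with the convention that the supremum over ∅ is 1. -/
def wS {n : ℕ} {𝒳 : Fin n → Type*} [∀ i, MeasurableSpace (𝒳 i)]
    (μ : ∀ i, Measure (𝒳 i)) (s : ∀ i, 𝒳 i → ℝ) (S : Set (∀ i, 𝒳 i → ℝ)) (y : ℝ) : ℝ :=
  if Nonempty {p : (∀ i, 𝒳 i → ℝ) × (∀ i, 𝒳 i → ℝ) //
      p.1 ∈ S ∧ p.2 ∈ S ∧ bH μ s p.1 ≤ y ∧ bH μ s p.2 ≤ y} then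
    ∫ x, (⨆ p : {p : (∀ i, 𝒳 i → ℝ) × (∀ i, 𝒳 i → ℝ) //
        p.1 ∈ S ∧ p.2 ∈ S ∧ bH μ s p.1 ≤ y ∧ bH μ s p.2 ≤ y},
      |Psi x p.1.1 p.1.2 - ∫ x', Psi x' p.1.1 p.1.2 ∂(Plaw μ s)|) ∂(Plaw μ s)
  else 1

/-- `ε^{S̄}(𝐬) = sup{y ≥ 1 : 𝐰^{S̄}(𝐬,y) > 6c₀⁻¹y²}` with `c₀ = 1000`. -/
def epsS {n : ℕ} {𝒳 : Fin n → Type*} [∀ i, MeasurableSpace (𝒳 i)]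
    (μ : ∀ i, Measure (𝒳 i)) (s : ∀ i, 𝒳 i → ℝ) (S : Set (∀ i, 𝒳 i → ℝ)) : ℝ :=
  sSup {y : ℝ | 1 ≤ y ∧ 6 / 1000 * y ^ 2 < wS μ s S y}

/-! ### Bounded measurable functions -/

/-- Bounded measurable real functions. -/
def BM {α : Type*} [MeasurableSpace α] (F : α → ℝ) : Prop :=
  Measurable F ∧ ∃ C, ∀ x, |F x| ≤ C

namespace BM
variable {α β : Type*} [MeasurableSpace α] [MeasurableSpace β] {F G : α → ℝ}

theorem int (h : BM F) (ν : Measure α) [IsFiniteMeasure ν] : Integrable F ν := by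
  obtain ⟨hm, C, hC⟩ := h
  exact Integrable.of_bound hm.aestronglyMeasurable C (Eventually.of_forall hC)

theorem const (c : ℝ) : BM (fun _ : α => c) := ⟨measurable_const, |c|, fun _ => le_rfl⟩

theorem add (hF : BM F) (hG : BM G) : BM (fun x => F x + G x) := by
  obtain ⟨hm, C, hC⟩ := hF
  obtain ⟨hm', C', hC'⟩ := hG
  exact ⟨hm.add hm', C + C', fun x => (abs_add_le _ _).trans (add_le_add (hC x) (hC' x))⟩

theorem neg (hF : BM F) : BM (fun x => - F x) := by
  obtain ⟨hm, C, hC⟩ := hF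
  exact ⟨hm.neg, C, fun x => by rw [abs_neg]; exact hC x⟩

theorem sub (hF : BM F) (hG : BM G) : BM (fun x => F x - G x) := by
  simpa [sub_eq_add_neg] using hF.add hG.neg

theorem mul (hF : BM F) (hG : BM G) : BM (fun x => F x * G x) := by
  obtain ⟨hm, C, hC⟩ := hF
  obtain ⟨hm', C', hC'⟩ := hG
  refine ⟨hm.mul hm', C * C', fun x => ?_⟩
  rw [abs_mul]
  exact mul_le_mul (hC x) (hC' x) (abs_nonneg _) ((abs_nonneg _).trans (hC x))

theorem pow (hF : BM F) (k : ℕ) : BM (fun x => F x ^ k) := by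
  induction k with
  | zero => simpa using BM.const (1 : ℝ)
  | succ k ih => simpa [pow_succ] using ih.mul hF

theorem max (hF : BM F) (hG : BM G) : BM (fun x => max (F x) (G x)) := by
  obtain ⟨hm, C, hC⟩ := hF
  obtain ⟨hm', C', hC'⟩ := hG
  refine ⟨hm.max hm', Max.max C C', fun x => ?_⟩
  exact abs_max_le_max_abs_abs.trans (max_le_max (hC x) (hC' x))

theorem exp (hF : BM F) : BM (fun x => Real.exp (F x)) := by
  obtain ⟨hm, C, hC⟩ := hF
  refine ⟨hm.exp, Real.exp C, fun x => ?_⟩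
  rw [abs_of_pos (Real.exp_pos _)]
  exact Real.exp_le_exp.2 ((le_abs_self _).trans (hC x))

theorem log (hF : BM F) {c : ℝ} (hc : 0 < c) (hcF : ∀ x, c ≤ F x) :
    BM (fun x => Real.log (F x)) := by
  obtain ⟨hm, C, hC⟩ := hF
  refine ⟨hm.log, Max.max |Real.log c| |Real.log C|, fun x => ?_⟩
  have h1 : Real.log c ≤ Real.log (F x) := Real.log_le_log hc (hcF x)
  have h2 : Real.log (F x) ≤ Real.log C :=
    Real.log_le_log (hc.trans_le (hcF x)) ((le_abs_self _).trans (hC x))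
  exact abs_le_max_abs_abs h1 h2

theorem comp (hF : BM F) {g : β → α} (hg : Measurable g) : BM (fun x => F (g x)) := by
  obtain ⟨hm, C, hC⟩ := hF
  exact ⟨hm.comp hg, C, fun x => hC _⟩

theorem sum {ι : Type*} (s : Finset ι) {F : ι → α → ℝ} (h : ∀ i ∈ s, BM (F i)) :
    BM (fun x => ∑ i ∈ s, F i x) := by
  induction s using Finset.induction with
  | empty => simpa using BM.const (0 : ℝ)
  | insert a s ha ih =>
    simp only [Finset.sum_insert ha]
    exact (h a (Finset.mem_insert_self _ _)).add
      (ih fun i hi => h i (Finset.mem_insert_of_mem hi))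

theorem integral {F : α × β → ℝ} (hF : BM F) (ν : Measure β) [IsProbabilityMeasure ν] :
    BM (fun x => ∫ y, F (x, y) ∂ν) := by
  obtain ⟨hm, C, hC⟩ := hF
  refine ⟨hm.stronglyMeasurable.integral_prod_right'.measurable, C, fun x => ?_⟩
  have := norm_integral_le_of_norm_le_const (μ := ν) (f := fun y => F (x, y)) (C := C)
    (Eventually.of_forall fun y => hC _)
  simpa using this

theorem iSup {ι : Type*} [Finite ι] {F : ι → α → ℝ} (h : ∀ i, BM (F i)) :
    BM (fun x => ⨆ i, F i x) := by
  cases nonempty_fintype ι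
  refine ⟨Measurable.iSup fun i => (h i).1, ?_⟩
  choose C hC using fun i => (h i).2
  refine ⟨∑ i, C i, fun x => ?_⟩
  have hnn : ∀ i, 0 ≤ C i := fun i => (abs_nonneg _).trans (hC i x)
  rcases isEmpty_or_nonempty ι with he | he
  · simp
  · obtain ⟨i, hi⟩ := exists_eq_ciSup_of_finite (f := fun i => F i x)
    show |⨆ i, F i x| ≤ _
    rw [← hi]
    exact (hC i x).trans (Finset.single_le_sum (f := C) (fun j _ => hnn j) (Finset.mem_univ i))

end BM

/-! ### Entropy inequalities on one probability space -/

section OneSpace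
variable {α : Type*} [MeasurableSpace α]

theorem integral_exp_pos_of_BM (ν : Measure α) [IsProbabilityMeasure ν] {z : α → ℝ} (hz : BM z) :
    0 < ∫ y, Real.exp (z y) ∂ν := by
  exact integral_exp_pos (hz.exp.int ν)

theorem mul_log_le_aux {x u : ℝ} (hx : 0 < x) (hu : 0 < u) :
    x * Real.log u ≤ x * Real.log x - x + u := by
  have h := Real.log_le_sub_one_of_pos (div_pos hu hx)
  rw [Real.log_div hu.ne' hx.ne'] at h
  have := mul_le_mul_of_nonneg_left h hx.le
  have h2 : x * (u / x - 1) = u - x := by field_simp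
  nlinarith

/-- Variational formula for the entropy. -/
theorem entropy_dual (ν : Measure α) [IsProbabilityMeasure ν] {z G : α → ℝ} (hz : BM z)
    (hG : BM G) {c : ℝ} (hc : 0 < c) (hcG : ∀ y, c ≤ G y) :
    ∫ y, Real.exp (z y) * (Real.log (G y) - Real.log (∫ y', G y' ∂ν)) ∂ν ≤
      ∫ y, Real.exp (z y) * z y ∂ν
        - (∫ y, Real.exp (z y) ∂ν) * Real.log (∫ y, Real.exp (z y) ∂ν) := by
  set H := ∫ y, Real.exp (z y) ∂ν with hH
  set m := ∫ y', G y' ∂ν with hm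
  have hHpos : 0 < H := integral_exp_pos_of_BM ν hz
  have hmpos : 0 < m := by
    have : c ≤ m := by
      have := integral_mono (μ := ν) (integrable_const c) (hG.int ν) hcG
      simpa using this
    linarith
  have key : ∀ y, Real.exp (z y) * (Real.log (G y) - Real.log m) ≤
      Real.exp (z y) * z y - Real.log H * Real.exp (z y) - Real.exp (z y) + H / m * G y := by
    intro y
    have hGp : 0 < G y := hc.trans_le (hcG y)
    have h := mul_log_le_aux (x := Real.exp (z y) / H) (u := G y / m) (by positivity)
      (by positivity)
    rw [Real.log_div hGp.ne' hmpos.ne', Real.log_div (Real.exp_pos _).ne' hHpos.ne',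
      Real.log_exp] at h
    have h' := mul_le_mul_of_nonneg_left h hHpos.le
    have e1 : H * (Real.exp (z y) / H * (Real.log (G y) - Real.log m)) =
      Real.exp (z y) * (Real.log (G y) - Real.log m) := by field_simp
    have e2 : H * (Real.exp (z y) / H * (z y - Real.log H) - Real.exp (z y) / H + G y / m) =
      Real.exp (z y) * z y - Real.log H * Real.exp (z y) - Real.exp (z y) + H / m * G y := by
      field_simp
    rw [e1, e2] at h'
    exact h'
  have hez := hz.exp
  have b1 : BM (fun y => Real.exp (z y) * z y) := hez.mul hz
  have b2 : BM (fun y => Real.log H * Real.exp (z y)) := (BM.const _).mul hez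
  have b3 : BM (fun y => H / m * G y) := (BM.const _).mul hG
  have hl : BM (fun y => Real.exp (z y) * (Real.log (G y) - Real.log m)) :=
    hez.mul ((hG.log hc hcG).sub (BM.const _))
  calc _ ≤ ∫ y, (Real.exp (z y) * z y - Real.log H * Real.exp (z y) - Real.exp (z y)
        + H / m * G y) ∂ν :=
        integral_mono (hl.int ν) ((((b1.sub b2).sub hez).add b3).int ν) key
    _ = _ := by
      rw [integral_add (((b1.sub b2).sub hez).int ν) (b3.int ν),
        integral_sub ((b1.sub b2).int ν) (hez.int ν), integral_sub (b1.int ν) (b2.int ν),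
        integral_const_mul, integral_const_mul, ← hH, ← hm]
      field_simp
      ring

theorem exp_sub_mul_le_aux (a b : ℝ) :
    (Real.exp a - Real.exp b) * (a - b) ≤
      Real.exp a * (max (a - b) 0) ^ 2 + Real.exp b * (max (b - a) 0) ^ 2 := by
  have h : ∀ a b : ℝ, b ≤ a → (Real.exp a - Real.exp b) * (a - b) ≤ Real.exp a * (a - b) ^ 2 := by
    intro a b hab
    have h1 := Real.add_one_le_exp (b - a)
    have h2 : Real.exp b = Real.exp a * Real.exp (b - a) := by rw [← Real.exp_add]; ring_nf
    rw [h2]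
    have h3 : (Real.exp a - Real.exp a * Real.exp (b - a)) ≤ Real.exp a * (a - b) := by
      have := mul_le_mul_of_nonneg_left h1 (Real.exp_pos a).le
      nlinarith
    calc _ ≤ Real.exp a * (a - b) * (a - b) := mul_le_mul_of_nonneg_right h3 (by linarith)
      _ = _ := by ring
  rcases le_total b a with hab | hab
  · rw [max_eq_left (by linarith), max_eq_right (by linarith : b - a ≤ 0)]
    simpa using h a b hab
  · rw [max_eq_right (by linarith), max_eq_left (by linarith : 0 ≤ b - a)]
    have := h b a hab
    nlinarith

/-- Local (one coordinate) modified logarithmic Sobolev inequality. -/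
theorem entropy_local (ν : Measure α) [IsProbabilityMeasure ν] {z G : α → ℝ} (hz : BM z)
    (hG : BM G) {c : ℝ} (hc : 0 < c) (hcG : ∀ y, c ≤ G y) :
    ∫ y, Real.exp (z y) * (Real.log (G y) - Real.log (∫ y', G y' ∂ν)) ∂ν ≤
      ∫ y, Real.exp (z y) * ∫ y', (max (z y - z y') 0) ^ 2 ∂ν ∂ν := by
  refine (entropy_dual ν hz hG hc hcG).trans ?_
  set H := ∫ y, Real.exp (z y) ∂ν with hH
  have hHpos : 0 < H := integral_exp_pos_of_BM ν hz
  have hez := hz.exp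
  have hj : ∫ y, z y ∂ν ≤ Real.log H := by
    have h1 : ∀ y, 1 - Real.log H + z y ≤ H⁻¹ * Real.exp (z y) := by
      intro y
      have := Real.add_one_le_exp (z y - Real.log H)
      rw [Real.exp_sub, Real.exp_log hHpos] at this
      rw [inv_mul_eq_div]; linarith
    have h2 := integral_mono (((BM.const _).add hz).int ν) (((BM.const _).mul hez).int ν) h1
    rw [integral_add (integrable_const _) (hz.int ν), integral_const_mul, ← hH,
      inv_mul_cancel₀ hHpos.ne'] at h2
    simp at h2
    linarith
  set π₂ : Measure (α × α) := ν.prod ν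
  have z1 : BM (fun p : α × α => z p.1) := hz.comp measurable_fst
  have z2 : BM (fun p : α × α => z p.2) := hz.comp measurable_snd
  have bm : BM (fun p : α × α => (max (z p.1 - z p.2) 0) ^ 2) :=
    ((z1.sub z2).max (BM.const 0)).pow 2
  have bm' : BM (fun p : α × α => (max (z p.2 - z p.1) 0) ^ 2) :=
    ((z2.sub z1).max (BM.const 0)).pow 2
  have r1 : ∫ p, Real.exp (z p.1) * (max (z p.1 - z p.2) 0) ^ 2 ∂π₂ =
      ∫ y, Real.exp (z y) * ∫ y', (max (z y - z y') 0) ^ 2 ∂ν ∂ν := by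
    rw [integral_prod _ ((z1.exp.mul bm).int _)]
    simp only [integral_const_mul]
  have r2 : ∫ p, Real.exp (z p.2) * (max (z p.2 - z p.1) 0) ^ 2 ∂π₂ =
      ∫ p, Real.exp (z p.1) * (max (z p.1 - z p.2) 0) ^ 2 ∂π₂ :=
    integral_prod_swap (μ := ν) (ν := ν)
      (fun p : α × α => Real.exp (z p.1) * (max (z p.1 - z p.2) 0) ^ 2)
  have r3 : ∫ p, (Real.exp (z p.1) - Real.exp (z p.2)) * (z p.1 - z p.2) ∂π₂ =
      2 * (∫ y, Real.exp (z y) * z y ∂ν - H * ∫ y, z y ∂ν) := by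
    have e : ∀ p : α × α, (Real.exp (z p.1) - Real.exp (z p.2)) * (z p.1 - z p.2) =
      (Real.exp (z p.1) * z p.1 + Real.exp (z p.2) * z p.2)
        - (Real.exp (z p.1) * z p.2 + z p.1 * Real.exp (z p.2)) := by intro p; ring
    simp only [e]
    rw [integral_sub (((z1.exp.mul z1).add (z2.exp.mul z2)).int _)
      (((z1.exp.mul z2).add (z1.mul z2.exp)).int _),
      integral_add ((z1.exp.mul z1).int _) ((z2.exp.mul z2).int _),
      integral_add ((z1.exp.mul z2).int _) ((z1.mul z2.exp).int _),
      integral_prod_mul (μ := ν) (ν := ν) (fun y => Real.exp (z y)) z,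
      integral_prod_mul (μ := ν) (ν := ν) z (fun y => Real.exp (z y)),
      integral_fun_fst (μ := ν) (ν := ν) (fun y => Real.exp (z y) * z y),
      integral_fun_snd (μ := ν) (ν := ν) (fun y => Real.exp (z y) * z y)]
    simp
    ring
  have r4 := integral_mono (μ := π₂) (((z1.exp.sub z2.exp).mul (z1.sub z2)).int _)
    (((z1.exp.mul bm).add (z2.exp.mul bm')).int _)
    (fun p => exp_sub_mul_le_aux (z p.1) (z p.2))
  rw [integral_add ((z1.exp.mul bm).int _) ((z2.exp.mul bm').int _), r2, r3, r1] at r4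
  have := mul_le_mul_of_nonneg_left hj hHpos.le
  linarith

end OneSpace

/-! ### Product spaces -/

section Product
variable {n : ℕ} {𝒳 : Fin n → Type*} [∀ i, MeasurableSpace (𝒳 i)]

theorem mp_update (P : ∀ i, Measure (𝒳 i)) [∀ i, IsProbabilityMeasure (P i)] (i : Fin n) :
    MeasurePreserving (fun p : (∀ i, 𝒳 i) × 𝒳 i => Function.update p.1 i p.2)
      ((Measure.pi P).prod (P i)) (Measure.pi P) := by
  refine ⟨measurable_update', ?_⟩
  symm
  refine Measure.pi_eq fun B hB => ?_
  rw [Measure.map_apply measurable_update' (MeasurableSet.univ_pi hB)]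
  have : (fun p : (∀ i, 𝒳 i) × 𝒳 i => Function.update p.1 i p.2) ⁻¹' (Set.univ.pi B) =
      (Set.univ.pi (Function.update B i Set.univ)) ×ˢ (B i) := by
    ext p
    simp only [Set.mem_preimage, Set.mem_pi, Set.mem_univ, forall_true_left, Set.mem_prod]
    constructor
    · intro h
      refine ⟨fun j => ?_, by simpa using h i⟩
      by_cases hj : j = i
      · subst hj; simp
      · simpa [hj] using h j
    · rintro ⟨h1, h2⟩ j
      by_cases hj : j = i
      · subst hj; simpa using h2
      · simpa [hj] using h1 j
  rw [this, Measure.prod_prod, Measure.pi_pi, ← Finset.prod_erase_mul _ _ (Finset.mem_univ i),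
    ← Finset.prod_erase_mul (a := i) _ (fun i => P i (B i)) (Finset.mem_univ i)]
  simp only [Function.update_self, measure_univ, mul_one]
  congr 1
  refine Finset.prod_congr rfl fun j hj => ?_
  rw [Function.update_of_ne (Finset.ne_of_mem_erase hj)]

theorem BM.update {F : (∀ i, 𝒳 i) → ℝ} (hF : BM F) (i : Fin n) :
    BM (fun p : (∀ i, 𝒳 i) × 𝒳 i => F (Function.update p.1 i p.2)) :=
  hF.comp measurable_update'

theorem BM.update_left {F : (∀ i, 𝒳 i) → ℝ} (hF : BM F) (i : Fin n) (x : ∀ i, 𝒳 i) :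
    BM (fun y : 𝒳 i => F (Function.update x i y)) :=
  hF.comp (measurable_update x)

theorem integral_update (P : ∀ i, Measure (𝒳 i)) [∀ i, IsProbabilityMeasure (P i)] (i : Fin n)
    {F : (∀ i, 𝒳 i) → ℝ} (hF : BM F) :
    ∫ x, ∫ y, F (Function.update x i y) ∂(P i) ∂(Measure.pi P) = ∫ x, F x ∂(Measure.pi P) := by
  rw [← integral_prod (fun p : (∀ i, 𝒳 i) × 𝒳 i => F (Function.update p.1 i p.2))
    ((hF.update i).int _)]
  conv_rhs => rw [← (mp_update P i).map_eq]
  rw [integral_map measurable_update'.aemeasurable hF.1.aestronglyMeasurable]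

theorem const_of_update {G : (∀ i, 𝒳 i) → ℝ}
    (h : ∀ i x y, G (Function.update x i y) = G x) (x x' : ∀ i, 𝒳 i) : G x = G x' := by
  have : ∀ A : Finset (Fin n), G (A.piecewise x x') = G x' := by
    intro A
    induction A using Finset.induction with
    | empty => simp
    | insert a A ha ih => rw [Finset.piecewise_insert, h, ih]
  simpa using this Finset.univ

/-- Tensorization of entropy and modified logarithmic Sobolev inequality. -/
theorem entropy_tensor (P : ∀ i, Measure (𝒳 i)) [∀ i, IsProbabilityMeasure (P i)]
    {Z V : (∀ i, 𝒳 i) → ℝ} (hZ : BM Z) (hV : BM V)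
    (h : ∀ x, ∑ i, ∫ y, (max (Z x - Z (Function.update x i y)) 0) ^ 2 ∂(P i) ≤ V x) :
    ∫ x, Real.exp (Z x) * Z x ∂(Measure.pi P) - (∫ x, Real.exp (Z x) ∂(Measure.pi P)) *
        Real.log (∫ x, Real.exp (Z x) ∂(Measure.pi P)) ≤
      ∫ x, Real.exp (Z x) * V x ∂(Measure.pi P) := by
  set Q := Measure.pi P with hQ
  set D : Fin n → (∀ i, 𝒳 i) → ℝ := fun i x =>
    ∫ y, (max (Z x - Z (Function.update x i y)) 0) ^ 2 ∂(P i) with hD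
  have hDbm : ∀ i, BM (D i) := by
    intro i
    have b : BM (fun p : (∀ i, 𝒳 i) × 𝒳 i => (max (Z p.1 - Z (Function.update p.1 i p.2)) 0) ^ 2) :=
      (((hZ.comp measurable_fst).sub (hZ.update i)).max (BM.const 0)).pow 2
    exact b.integral (P i)
  have hez := hZ.exp
  obtain ⟨K, hK⟩ := hZ.2
  have hlow : ∀ x, Real.exp (-K) ≤ Real.exp (Z x) := fun x =>
    Real.exp_le_exp.2 (abs_le.1 (hK x)).1
  have main : ∀ A : Finset (Fin n), ∃ G : (∀ i, 𝒳 i) → ℝ, BM G ∧ (∀ x, Real.exp (-K) ≤ G x) ∧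
      (∀ i ∈ A, ∀ x y, G (Function.update x i y) = G x) ∧
      ∫ x, G x ∂Q = ∫ x, Real.exp (Z x) ∂Q ∧
      ∫ x, Real.exp (Z x) * (Z x - Real.log (G x)) ∂Q ≤
        ∑ i ∈ A, ∫ x, Real.exp (Z x) * D i x ∂Q := by
    intro A
    induction A using Finset.induction with
    | empty =>
      refine ⟨fun x => Real.exp (Z x), hez, hlow, by simp, rfl, by simp⟩
    | insert i A hi ih =>
      obtain ⟨G, hG, hGl, hGi, hGint, hGle⟩ := ih
      have hG' : BM (fun x => ∫ y, G (Function.update x i y) ∂(P i)) := (hG.update i).integral (P i)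
      have hGl' : ∀ x, Real.exp (-K) ≤ ∫ y, G (Function.update x i y) ∂(P i) := by
        intro x
        have := integral_mono (μ := P i) (integrable_const (Real.exp (-K)))
          ((hG.update_left i x).int _) (fun y => hGl _)
        simpa using this
      refine ⟨fun x => ∫ y, G (Function.update x i y) ∂(P i), hG', hGl', ?_, ?_, ?_⟩
      · intro j hj x y
        rcases Finset.mem_insert.1 hj with rfl | hj
        · simp
        · have hne : j ≠ i := fun e => hi (e ▸ hj)
          simp only []
          congr 1
          ext y'
          rw [Function.update_comm hne, hGi j hj]
      · rw [← hGint]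
        exact integral_update P i hG
      · have lG := hG.log (Real.exp_pos _) hGl
        have lG' := hG'.log (Real.exp_pos _) hGl'
        have split : ∫ x, Real.exp (Z x) *
            (Z x - Real.log (∫ y, G (Function.update x i y) ∂(P i))) ∂Q =
            ∫ x, Real.exp (Z x) * (Z x - Real.log (G x)) ∂Q +
            ∫ x, Real.exp (Z x) * (Real.log (G x)
              - Real.log (∫ y, G (Function.update x i y) ∂(P i))) ∂Q := by
          rw [← integral_add ((hez.mul (hZ.sub lG)).int _) ((hez.mul (lG.sub lG')).int _)]
          congr 1
          ext x
          ring
        rw [split, Finset.sum_insert hi, add_comm]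
        refine add_le_add ?_ hGle
        have bL := hez.mul (lG.sub lG')
        have bR := hez.mul (hDbm i)
        rw [hQ, ← integral_update P i bL, ← integral_update P i bR]
        refine integral_mono (((bL.update i).integral (P i)).int _)
          (((bR.update i).integral (P i)).int _) fun x => ?_
        have := entropy_local (P i) (hZ.update_left i x) (hG.update_left i x) (Real.exp_pos _)
          (fun y => hGl _)
        simpa [hD] using this
  obtain ⟨G, hG, hGl, hGi, hGint, hGle⟩ := main Finset.univ
  have hconst : ∀ x, G x = ∫ x, Real.exp (Z x) ∂Q := by
    intro x
    have : G = fun _ => G x := funext fun x' =>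
      const_of_update (fun i x y => hGi i (Finset.mem_univ i) x y) x' x
    rw [← hGint, this]
    simp
  simp only [hconst] at hGle
  have e1 : ∫ x, Real.exp (Z x) * (Z x - Real.log (∫ x, Real.exp (Z x) ∂Q)) ∂Q =
      ∫ x, Real.exp (Z x) * Z x ∂Q - (∫ x, Real.exp (Z x) ∂Q) *
        Real.log (∫ x, Real.exp (Z x) ∂Q) := by
    simp only [mul_sub]
    rw [integral_sub ((hez.mul hZ).int _) ((hez.mul (BM.const _)).int _), integral_mul_const]
  rw [e1] at hGle
  refine hGle.trans ?_
  rw [← integral_finsetSum _ (fun i _ => (hez.mul (hDbm i)).int Q)]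
  refine integral_mono ((BM.sum _ fun i _ => hez.mul (hDbm i)).int _) ((hez.mul hV).int _) fun x => ?_
  simp only [← Finset.mul_sum]
  exact mul_le_mul_of_nonneg_left (h x) (Real.exp_pos _).le

end Product

/-! ### Herbst argument -/

section Herbst
open ProbabilityTheory
variable {α : Type*} [MeasurableSpace α]

theorem mem_interior_of_BM (ν : Measure α) [IsProbabilityMeasure ν] {Z : α → ℝ} (hZ : BM Z)
    (l : ℝ) : l ∈ interior (integrableExpSet Z ν) := by
  have : integrableExpSet Z ν = Set.univ := by
    ext t
    simp only [integrableExpSet, Set.mem_ofPred_eq, Set.mem_univ, iff_true]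
    exact (((BM.const t).mul hZ).exp).int ν
  rw [this]; simp

theorem herbst (ν : Measure α) [IsProbabilityMeasure ν] {Z : α → ℝ} (hZ : BM Z)
    {R r : ℝ → ℝ} (hR : ∀ l, HasDerivAt R (r l) l) {L : ℝ}
    (h : ∀ l, 0 < l → l ≤ L →
      l * deriv (cgf Z ν) l - cgf Z ν l ≤ l ^ 2 * r l) :
    ∀ l, 0 < l → l ≤ L → cgf Z ν l ≤ l * (∫ x, Z x ∂ν + R l - R 0) := by
  have hdK : ∀ l, HasDerivAt (cgf Z ν) (deriv (cgf Z ν) l) l := fun l =>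
    (analyticAt_cgf (mem_interior_of_BM ν hZ l)).differentiableAt.hasDerivAt
  have hd : ∀ l, 0 < l → HasDerivAt (fun l => cgf Z ν l / l - R l)
      ((deriv (cgf Z ν) l * l - cgf Z ν l * 1) / l ^ 2 - r l) l := fun l hl =>
    ((hdK l).div (hasDerivAt_id l) hl.ne').sub (hR l)
  have hanti : AntitoneOn (fun l => cgf Z ν l / l - R l) (Set.Ioc 0 L) := by
    refine antitoneOn_of_deriv_nonpos (convex_Ioc 0 L)
      (fun l hl => (hd l hl.1).continuousAt.continuousWithinAt)
      (fun l hl => ((hd l (interior_subset hl).1).differentiableAt).differentiableWithinAt) ?_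
    intro l hl
    obtain ⟨hl0, hlL⟩ := interior_subset hl
    rw [(hd l hl0).deriv]
    have := h l hl0 hlL
    rw [sub_nonpos, div_le_iff₀ (by positivity)]
    linarith
  intro l hl hlL
  have hlim : Tendsto (fun l => cgf Z ν l / l - R l) (nhdsWithin 0 (Set.Ioi 0))
      (nhds (∫ x, Z x ∂ν - R 0)) := by
    refine Tendsto.sub ?_ ((hR 0).continuousAt.tendsto.mono_left nhdsWithin_le_nhds)
    have h0 := hdK 0
    rw [deriv_cgf_zero (mem_interior_of_BM ν hZ 0)] at h0
    have := h0.hasDerivWithinAt (s := Set.Ioi 0)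
    rw [hasDerivWithinAt_iff_tendsto_slope' (by simp)] at this
    simp only [probReal_univ, div_one] at this
    refine this.congr fun t => ?_
    simp [slope_def_field, cgf_zero]
  have hge : cgf Z ν l / l - R l ≤ ∫ x, Z x ∂ν - R 0 := by
    refine ge_of_tendsto hlim ?_
    filter_upwards [Ioc_mem_nhdsGT hl] with t ht
    exact hanti ⟨ht.1, ht.2.trans hlL⟩ ⟨hl, hlL⟩ ht.2
  have : cgf Z ν l / l ≤ ∫ x, Z x ∂ν + R l - R 0 := by linarith
  rw [div_le_iff₀ hl] at this
  linarith

/-- Entropy in terms of the cumulant generating function. -/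
theorem entropy_cgf (ν : Measure α) [IsProbabilityMeasure ν] {Z : α → ℝ} (hZ : BM Z) (l : ℝ) :
    ∫ x, Real.exp (l * Z x) * (l * Z x) ∂ν - (∫ x, Real.exp (l * Z x) ∂ν) *
        Real.log (∫ x, Real.exp (l * Z x) ∂ν) =
      mgf Z ν l * (l * deriv (cgf Z ν) l - cgf Z ν l) := by
  have hpos : 0 < mgf Z ν l := integral_exp_pos_of_BM ν ((BM.const l).mul hZ)
  rw [deriv_cgf (mem_interior_of_BM ν hZ l), cgf]
  have e : ∫ x, Real.exp (l * Z x) * (l * Z x) ∂ν = l * ∫ x, Z x * Real.exp (l * Z x) ∂ν := by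
    rw [← integral_const_mul]; congr 1; ext x; ring
  rw [e]
  have e2 : (∫ x, Real.exp (l * Z x) ∂ν) = mgf Z ν l := rfl
  rw [e2]
  field_simp

end Herbst

/-! ### Suprema over a finite class -/

section FiniteClass
variable {n : ℕ} {𝒳 : Fin n → Type*} [∀ i, MeasurableSpace (𝒳 i)]
variable {ι : Type*} [Finite ι] [Nonempty ι]

/-- Supremum over a finite class of sums of functions of the coordinates. -/
def TS {n : ℕ} {𝒳 : Fin n → Type*} {ι : Type*} (G : ι → ∀ i, 𝒳 i → ℝ) (x : ∀ i, 𝒳 i) : ℝ :=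
  ⨆ a, ∑ i, G a i (x i)

theorem fin_le_iSup {ι : Type*} [Finite ι] (g : ι → ℝ) (a : ι) : g a ≤ ⨆ b, g b :=
  le_ciSup (Set.finite_range g).bddAbove a

theorem TS_BM {G : ι → ∀ i, 𝒳 i → ℝ} (hG : ∀ a i, BM (G a i)) : BM (TS G) :=
  BM.iSup fun a => BM.sum _ fun i _ => (hG a i).comp (measurable_pi_apply i)

theorem TS_update {G : ι → ∀ i, 𝒳 i → ℝ} (x : ∀ i, 𝒳 i) (i : Fin n) (y : 𝒳 i) :
    TS G (Function.update x i y) =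
      ⨆ a, ((∑ j ∈ Finset.univ.erase i, G a j (x j)) + G a i y) := by
  unfold TS
  congr 1
  ext a
  rw [← Finset.sum_erase_add _ _ (Finset.mem_univ i)]
  congr 1
  · refine Finset.sum_congr rfl fun j hj => ?_
    rw [Function.update_of_ne (Finset.ne_of_mem_erase hj)]
  · simp

theorem TS_step (P : ∀ i, Measure (𝒳 i)) [∀ i, IsProbabilityMeasure (P i)] (i : Fin n)
    {G G1 G2 : ι → ∀ i, 𝒳 i → ℝ} (hG : ∀ a i, BM (G a i)) (hG1 : ∀ a i, BM (G1 a i))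
    (hG2 : ∀ a i, BM (G2 a i)) (h1 : ∀ a j, j ≠ i → G1 a j = G a j)
    (h2 : ∀ a j, j ≠ i → G2 a j = G a j)
    (hone : ∀ u : ι → ℝ, ∫ y, ⨆ a, (u a + G a i y) ∂(P i) ≤
      (∫ y, ⨆ a, (u a + G1 a i y) ∂(P i) + ∫ y, ⨆ a, (u a + G2 a i y) ∂(P i)) / 2) :
    ∫ x, TS G x ∂(Measure.pi P) ≤
      (∫ x, TS G1 x ∂(Measure.pi P) + ∫ x, TS G2 x ∂(Measure.pi P)) / 2 := by
  rw [← integral_update P i (TS_BM hG), ← integral_update P i (TS_BM hG1),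
    ← integral_update P i (TS_BM hG2)]
  have b0 := ((TS_BM hG).update i).integral (P i)
  have b1 := ((TS_BM hG1).update i).integral (P i)
  have b2 := ((TS_BM hG2).update i).integral (P i)
  rw [← integral_add (b1.int _) (b2.int _), ← integral_div]
  refine integral_mono (b0.int _) (((b1.add b2).int _).div_const 2) fun x => ?_
  simp only [TS_update]
  have e1 : ∀ a, ∑ j ∈ Finset.univ.erase i, G1 a j (x j) = ∑ j ∈ Finset.univ.erase i, G a j (x j) :=
    fun a => Finset.sum_congr rfl fun j hj => by rw [h1 a j (Finset.ne_of_mem_erase hj)]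
  have e2 : ∀ a, ∑ j ∈ Finset.univ.erase i, G2 a j (x j) = ∑ j ∈ Finset.univ.erase i, G a j (x j) :=
    fun a => Finset.sum_congr rfl fun j hj => by rw [h2 a j (Finset.ne_of_mem_erase hj)]
  simp only [e1, e2]
  exact hone _

/-- One-dimensional symmetrization and contraction. -/
theorem contraction_one {α : Type*} [MeasurableSpace α] (ν : Measure α) [IsProbabilityMeasure ν]
    {φ h : ι → α → ℝ} (hφ : ∀ a, BM (φ a)) (hh : ∀ a, BM (h a))
    (hL : ∀ a b y, 2 * |φ a y - φ b y| ≤ |h a y - h b y|) (u : ι → ℝ) :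
    ∫ y, ⨆ a, (u a + (φ a y - ∫ y', φ a y' ∂ν)) ∂ν ≤
      (∫ y, ⨆ a, (u a + h a y) ∂ν + ∫ y, ⨆ a, (u a + - h a y) ∂ν) / 2 := by
  have bp : BM (fun y => ⨆ a, (u a + 2 * φ a y)) :=
    BM.iSup fun a => (BM.const _).add ((BM.const 2).mul (hφ a))
  have bm : BM (fun y => ⨆ a, (u a - 2 * φ a y)) :=
    BM.iSup fun a => (BM.const _).sub ((BM.const 2).mul (hφ a))
  have b1 : BM (fun y => ⨆ a, (u a + h a y)) := BM.iSup fun a => (BM.const _).add (hh a)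
  have b2 : BM (fun y => ⨆ a, (u a + - h a y)) := BM.iSup fun a => (BM.const _).add (hh a).neg
  have b0 : BM (fun y => ⨆ a, (u a + (φ a y - ∫ y', φ a y' ∂ν))) :=
    BM.iSup fun a => (BM.const _).add ((hφ a).sub (BM.const _))
  have s1 : ∀ y, (⨆ a, (u a + (φ a y - ∫ y', φ a y' ∂ν))) ≤
      ((⨆ a, (u a + 2 * φ a y)) + ∫ y', ⨆ a, (u a - 2 * φ a y') ∂ν) / 2 := by
    intro y
    refine ciSup_le fun a => ?_
    have t1 := fin_le_iSup (fun a => u a + 2 * φ a y) a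
    have t2 : u a - 2 * ∫ y', φ a y' ∂ν ≤ ∫ y', ⨆ a, (u a - 2 * φ a y') ∂ν := by
      have := integral_mono (μ := ν) (((BM.const (u a)).sub ((BM.const 2).mul (hφ a))).int ν)
        (bm.int ν) (fun y' => fin_le_iSup (fun a => u a - 2 * φ a y') a)
      rw [integral_sub (integrable_const _) (((BM.const 2).mul (hφ a)).int ν),
        integral_const_mul] at this
      simpa using this
    linarith
  have s2 := integral_mono (b0.int ν) (((bp.add (BM.const _)).int ν).div_const 2) s1
  rw [integral_div, integral_add (bp.int ν) (integrable_const _)] at s2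
  simp only [integral_const, probReal_univ, smul_eq_mul, one_mul] at s2
  refine s2.trans ?_
  rw [← integral_add (bp.int ν) (bm.int ν), ← integral_add (b1.int ν) (b2.int ν)]
  refine div_le_div_of_nonneg_right ?_ (by norm_num)
  refine integral_mono ((bp.add bm).int ν) ((b1.add b2).int ν) fun y => ?_
  simp only []
  obtain ⟨a, ha⟩ := exists_eq_ciSup_of_finite (f := fun a => u a + 2 * φ a y)
  obtain ⟨b, hb⟩ := exists_eq_ciSup_of_finite (f := fun a => u a - 2 * φ a y)
  rw [← ha, ← hb]
  have l1 := hL a b y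
  have l2 := le_abs_self (φ a y - φ b y)
  have t1 := fin_le_iSup (fun a => u a + h a y) a
  have t2 := fin_le_iSup (fun a => u a + - h a y) b
  have t3 := fin_le_iSup (fun a => u a + h a y) b
  have t4 := fin_le_iSup (fun a => u a + - h a y) a
  rcases abs_cases (h a y - h b y) with ⟨h', _⟩ | ⟨h', _⟩ <;> rw [h'] at l1 <;> linarith

/-- Adding centred coordinates increases the expected supremum. -/
theorem TS_partial (P : ∀ i, Measure (𝒳 i)) [∀ i, IsProbabilityMeasure (P i)]
    {h : ι → ∀ i, 𝒳 i → ℝ} (hh : ∀ a i, BM (h a i)) (h0 : ∀ a i, ∫ y, h a i y ∂(P i) = 0)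
    (p : Fin n → Prop) [DecidablePred p] :
    ∫ x, TS (fun a i y => if p i then h a i y else 0) x ∂(Measure.pi P) ≤
      ∫ x, TS h x ∂(Measure.pi P) := by
  have bmif : ∀ (q : Fin n → Prop) [DecidablePred q] a i, BM (fun y => if q i then h a i y else 0) := by
    intro q _ a i
    by_cases hq : q i
    · simpa [hq] using hh a i
    · simpa [hq] using BM.const (0 : ℝ)
  have main : ∀ A : Finset (Fin n),
      ∫ x, TS (fun a i y => if p i then h a i y else 0) x ∂(Measure.pi P) ≤
      ∫ x, TS (fun a i y => if p i ∨ i ∈ A then h a i y else 0) x ∂(Measure.pi P) := by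
    intro A
    induction A using Finset.induction with
    | empty => simp
    | insert i A hi ih =>
      refine ih.trans ?_
      by_cases hp : p i
      · apply le_of_eq
        congr 1
        ext x
        congr 1
        ext a j y
        by_cases hj : j = i
        · subst hj; simp [hp]
        · simp [hj]
      · have := TS_step P i (G := fun a i y => if p i ∨ i ∈ A then h a i y else 0)
          (G1 := fun a j y => if p j ∨ j ∈ insert i A then h a j y else 0)
          (G2 := fun a j y => if p j ∨ j ∈ insert i A then h a j y else 0)
          (bmif _) (bmif _) (bmif _) (fun a j hj => by ext y; simp [hj])
          (fun a j hj => by ext y; simp [hj]) ?_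
        · rw [add_self_div_two] at this
          exact this
        · intro u
          rw [add_self_div_two]
          simp only [hp, hi, or_self, if_false, add_zero, Finset.mem_insert_self, or_true, if_true,
            integral_const, probReal_univ, smul_eq_mul, one_mul]
          refine ciSup_le fun a => ?_
          have := integral_mono (μ := P i) (((BM.const (u a)).add (hh a i)).int _)
            ((BM.iSup fun a => (BM.const (u a)).add (hh a i)).int (P i))
            (fun y => fin_le_iSup (fun a => u a + h a i y) a)
          rw [integral_add (integrable_const _) ((hh a i).int _), h0] at this
          simpa using this
  simpa using main Finset.univ

/-- Symmetrization and contraction on the product space. -/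
theorem contraction_prod (P : ∀ i, Measure (𝒳 i)) [∀ i, IsProbabilityMeasure (P i)]
    {φ h : ι → ∀ i, 𝒳 i → ℝ} (hφ : ∀ a i, BM (φ a i)) (hh : ∀ a i, BM (h a i))
    (h0 : ∀ a i, ∫ y, h a i y ∂(P i) = 0)
    (hL : ∀ i a b y, 2 * |φ a i y - φ b i y| ≤ |h a i y - h b i y|) :
    ∫ x, TS (fun a i y => φ a i y - ∫ y', φ a i y' ∂(P i)) x ∂(Measure.pi P) ≤
      ∫ x, TS h x ∂(Measure.pi P) + ∫ x, TS (fun a i y => - h a i y) x ∂(Measure.pi P) := by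
  have hc : ∀ a i, BM (fun y => φ a i y - ∫ y', φ a i y' ∂(P i)) :=
    fun a i => (hφ a i).sub (BM.const _)
  have main : ∀ A : Finset (Fin n), ∃ G : ι → ∀ i, 𝒳 i → ℝ, (∀ a i, BM (G a i)) ∧
      (∀ i ∈ A, (∀ a, G a i = h a i) ∨ (∀ a, G a i = fun y => - h a i y)) ∧
      (∀ i ∉ A, ∀ a, G a i = fun y => φ a i y - ∫ y', φ a i y' ∂(P i)) ∧
      ∫ x, TS (fun a i y => φ a i y - ∫ y', φ a i y' ∂(P i)) x ∂(Measure.pi P) ≤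
      ∫ x, TS G x ∂(Measure.pi P) := by
    intro A
    induction A using Finset.induction with
    | empty => exact ⟨_, hc, by simp, by simp, le_rfl⟩
    | insert i A hi ih =>
      obtain ⟨G, hG, hGA, hGn, hGle⟩ := ih
      have bmu : ∀ (k : ι → 𝒳 i → ℝ), (∀ a, BM (k a)) →
          ∀ a j, BM (Function.update (G a) i (k a) j) := by
        intro k hk a j
        by_cases hj : j = i
        · subst hj; simpa using hk a
        · simpa [hj] using hG a j
      have st := TS_step P i (G := G) (G1 := fun a => Function.update (G a) i (h a i))
        (G2 := fun a => Function.update (G a) i (fun y => - h a i y)) hG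
        (bmu _ fun a => hh a i) (bmu _ fun a => (hh a i).neg)
        (fun a j hj => by simp [hj]) (fun a j hj => by simp [hj])
        (by
          intro u
          have := contraction_one (P i) (φ := fun a => φ a i) (h := fun a => h a i)
            (fun a => hφ a i) (fun a => hh a i) (hL i) u
          simpa [hGn i hi] using this)
      rcases le_total (∫ x, TS (fun a => Function.update (G a) i (h a i)) x ∂(Measure.pi P))
        (∫ x, TS (fun a => Function.update (G a) i (fun y => - h a i y)) x ∂(Measure.pi P))
        with hle | hle
      · refine ⟨_, bmu _ fun a => (hh a i).neg, ?_, ?_, hGle.trans (st.trans ?_)⟩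
        · intro j hj
          by_cases hji : j = i
          · subst hji; right; simp
          · simpa [hji] using hGA j ((Finset.mem_insert.1 hj).resolve_left hji)
        · intro j hj a
          rw [Finset.mem_insert, not_or] at hj
          simpa [hj.1] using hGn j hj.2 a
        · linarith
      · refine ⟨_, bmu _ fun a => (hh a i), ?_, ?_, hGle.trans (st.trans ?_)⟩
        · intro j hj
          by_cases hji : j = i
          · subst hji; left; simp
          · simpa [hji] using hGA j ((Finset.mem_insert.1 hj).resolve_left hji)
        · intro j hj a
          rw [Finset.mem_insert, not_or] at hj
          simpa [hj.1] using hGn j hj.2 a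
        · linarith
  obtain ⟨G, hG, hGA, -, hGle⟩ := main Finset.univ
  refine hGle.trans ?_
  let p : Fin n → Prop := fun i => ∀ a, G a i = h a i
  have hn : ∀ a i, BM (fun y => - h a i y) := fun a i => (hh a i).neg
  have e1 := TS_partial P hh h0 p
  have e2 := TS_partial P (h := fun a i y => - h a i y) hn
    (fun a i => by rw [integral_neg, h0, neg_zero]) (fun i => ¬ p i)
  have bmif : ∀ (q : Fin n → Prop) [DecidablePred q] (h : ι → ∀ i, 𝒳 i → ℝ), (∀ a i, BM (h a i)) → ∀ a i,
      BM (fun y => if q i then h a i y else 0) := by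
    intro q _ h hh a i
    by_cases hq : q i
    · simpa [hq] using hh a i
    · simpa [hq] using BM.const (0 : ℝ)
  have b1 := TS_BM (bmif p h hh)
  have b2 := TS_BM (bmif (fun i => ¬ p i) (fun a i y => - h a i y) hn)
  refine le_trans ?_ (add_le_add e1 e2)
  rw [← integral_add (b1.int _) (b2.int _)]
  refine integral_mono ((TS_BM hG).int _) ((b1.add b2).int _) fun x => ?_
  refine ciSup_le fun a => ?_
  have : ∑ i, G a i (x i) = (∑ i, if p i then h a i (x i) else 0)
      + ∑ i, if ¬ p i then - h a i (x i) else 0 := by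
    rw [← Finset.sum_add_distrib]
    refine Finset.sum_congr rfl fun i _ => ?_
    by_cases hp : p i
    · simp [hp, hp a]
    · have := (hGA i (Finset.mem_univ i)).resolve_left hp a
      simp [hp, this]
  rw [this]
  exact add_le_add (fin_le_iSup (fun a => ∑ i, if p i then h a i (x i) else 0) a)
    (fin_le_iSup (fun a => ∑ i, if ¬ p i then - h a i (x i) else 0) a)

end FiniteClass

/-! ### Concentration for suprema over a finite class -/

section Concentration
open ProbabilityTheory
variable {n : ℕ} {𝒳 : Fin n → Type*} [∀ i, MeasurableSpace (𝒳 i)]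
variable {ι : Type*} [Finite ι] [Nonempty ι]

theorem TS_sub_update_le {G : ι → ∀ i, 𝒳 i → ℝ} (x : ∀ i, 𝒳 i) (a : ι)
    (ha : ∑ i, G a i (x i) = TS G x) (i : Fin n) (y : 𝒳 i) :
    TS G x - TS G (Function.update x i y) ≤ G a i (x i) - G a i y := by
  rw [TS_update, ← ha, ← Finset.sum_erase_add _ _ (Finset.mem_univ i)]
  have := fin_le_iSup (fun a => (∑ j ∈ Finset.univ.erase i, G a j (x j)) + G a i y) a
  linarith

theorem max_sq_le_aux {D d : ℝ} (h : D ≤ d) : (max D 0) ^ 2 ≤ d ^ 2 := by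
  rcases le_total D 0 with hD | hD
  · rw [max_eq_right hD]; simpa using sq_nonneg d
  · rw [max_eq_left hD]; exact pow_le_pow_left₀ hD h 2

/-- The tensorized entropy bound in terms of the cumulant generating function. -/
theorem entropy_bound_cgf (P : ∀ i, Measure (𝒳 i)) [∀ i, IsProbabilityMeasure (P i)]
    {Z V : (∀ i, 𝒳 i) → ℝ} (hZ : BM Z) (hV : BM V)
    (h : ∀ x, ∑ i, ∫ y, (max (Z x - Z (Function.update x i y)) 0) ^ 2 ∂(P i) ≤ V x)
    {l : ℝ} (hl : 0 < l) :
    mgf Z (Measure.pi P) l * (l * deriv (cgf Z (Measure.pi P)) l - cgf Z (Measure.pi P) l) ≤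
      l ^ 2 * ∫ x, Real.exp (l * Z x) * V x ∂(Measure.pi P) := by
  rw [← entropy_cgf _ hZ]
  have := entropy_tensor P (Z := fun x => l * Z x) (V := fun x => l ^ 2 * V x)
    ((BM.const l).mul hZ) ((BM.const _).mul hV) (by
      intro x
      have e : ∀ i (y : 𝒳 i), (max (l * Z x - l * Z (Function.update x i y)) 0) ^ 2 =
          l ^ 2 * (max (Z x - Z (Function.update x i y)) 0) ^ 2 := by
        intro i y
        rw [← mul_sub, ← mul_pow, mul_max_of_nonneg _ _ hl.le, mul_zero]
      simp only [e, integral_const_mul, ← Finset.mul_sum]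
      exact mul_le_mul_of_nonneg_left (h x) (by positivity))
  refine this.trans (le_of_eq ?_)
  rw [← integral_const_mul]
  congr 1
  ext x
  ring

/-- Exponential moment of the supremum of nonnegative functions bounded by one. -/
theorem cgf_selfbounding (P : ∀ i, Measure (𝒳 i)) [∀ i, IsProbabilityMeasure (P i)]
    {g : ι → ∀ i, 𝒳 i → ℝ} (hg : ∀ a i, BM (g a i)) (hg0 : ∀ a i y, 0 ≤ g a i y)
    (hg1 : ∀ a i y, g a i y ≤ 1) :
    cgf (TS g) (Measure.pi P) (1 / 2) ≤ ∫ x, TS g x ∂(Measure.pi P) := by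
  have hW := TS_BM hg
  set Q := Measure.pi P with hQ
  have hv : ∀ x, ∑ i, ∫ y, (max (TS g x - TS g (Function.update x i y)) 0) ^ 2 ∂(P i) ≤ TS g x := by
    intro x
    obtain ⟨a, ha⟩ := exists_eq_ciSup_of_finite (f := fun a => ∑ i, g a i (x i))
    have ha' : ∑ i, g a i (x i) = TS g x := ha
    conv_rhs => rw [← ha']
    refine Finset.sum_le_sum fun i _ => ?_
    have hp : ∀ y, (max (TS g x - TS g (Function.update x i y)) 0) ^ 2 ≤ g a i (x i) := by
      intro y
      have h1 : TS g x - TS g (Function.update x i y) ≤ g a i (x i) :=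
        (TS_sub_update_le x a ha' i y).trans (by linarith [hg0 a i y])
      refine (max_sq_le_aux h1).trans ?_
      nlinarith [hg0 a i (x i), hg1 a i (x i)]
    have b : BM (fun y => (max (TS g x - TS g (Function.update x i y)) 0) ^ 2) :=
      (((BM.const _).sub (hW.update_left i x)).max (BM.const 0)).pow 2
    have := integral_mono (b.int (P i)) (integrable_const _) hp
    simpa using this
  have hH := herbst Q hW (R := cgf (TS g) Q) (r := deriv (cgf (TS g) Q)) (L := 1 / 2)
    (fun l => (analyticAt_cgf (mem_interior_of_BM Q hW l)).differentiableAt.hasDerivAt) (by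
      intro l hl _
      have hb := entropy_bound_cgf P hW hW hv hl
      have hpos : 0 < mgf (TS g) Q l := integral_exp_pos_of_BM Q ((BM.const l).mul hW)
      have e : ∫ x, Real.exp (l * TS g x) * TS g x ∂Q = mgf (TS g) Q l * deriv (cgf (TS g) Q) l := by
        rw [deriv_cgf (mem_interior_of_BM Q hW l), mul_div_cancel₀ _ hpos.ne']
        congr 1; ext x; ring
      rw [← hQ, e] at hb
      have : mgf (TS g) Q l * (l * deriv (cgf (TS g) Q) l - cgf (TS g) Q l) ≤
        mgf (TS g) Q l * (l ^ 2 * deriv (cgf (TS g) Q) l) := by linarith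
      exact le_of_mul_le_mul_left this hpos) (1 / 2) (by norm_num) le_rfl
  rw [cgf_zero] at hH
  linarith

/-- Bernstein type bound for suprema of empirical processes (independent, not identically
distributed). -/
theorem cgf_sup_le (P : ∀ i, Measure (𝒳 i)) [∀ i, IsProbabilityMeasure (P i)]
    {f : ι → ∀ i, 𝒳 i → ℝ} (hf : ∀ a i, BM (f a i)) (hf1 : ∀ a i y, |f a i y| ≤ 1)
    (hf0 : ∀ a i, ∫ y, f a i y ∂(P i) = 0) {σ B : ℝ}
    (hσ : ∀ a, ∑ i, ∫ y, f a i y ^ 2 ∂(P i) ≤ σ)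
    (hB1 : ∫ x, TS f x ∂(Measure.pi P) ≤ B)
    (hB2 : ∫ x, TS (fun a i y => - f a i y) x ∂(Measure.pi P) ≤ B)
    {l : ℝ} (hl : 0 < l) (hl2 : l ≤ 1 / 2) :
    cgf (TS f) (Measure.pi P) l ≤ l * (B + 2 * (3 * σ + 16 * B) * l) := by
  set Q := Measure.pi P with hQ
  have hZ := TS_BM hf
  set g : ι → ∀ i, 𝒳 i → ℝ := fun a i y => f a i y ^ 2 with hg
  have hgb : ∀ a i, BM (g a i) := fun a i => (hf a i).pow 2
  have hg0 : ∀ a i y, 0 ≤ g a i y := fun a i y => sq_nonneg _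
  have hg1 : ∀ a i y, g a i y ≤ 1 := fun a i y => by
    have := hf1 a i y
    simp only [hg]
    rw [← sq_abs]
    nlinarith [abs_nonneg (f a i y)]
  have hW := TS_BM hgb
  have hσ0 : 0 ≤ σ := by
    obtain ⟨a⟩ := ‹Nonempty ι›
    exact (Finset.sum_nonneg fun i _ => integral_nonneg fun y => sq_nonneg _).trans (hσ a)
  -- the expectation of W
  have hEW : ∫ x, TS g x ∂Q ≤ σ + 8 * B := by
    have c := contraction_prod P (φ := g) (h := fun a i y => 4 * f a i y) hgb
      (fun a i => (BM.const 4).mul (hf a i)) (fun a i => by rw [integral_const_mul, hf0, mul_zero])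
      (by
        intro i a b y
        have e : g a i y - g b i y = (f a i y - f b i y) * (f a i y + f b i y) := by
          simp only [hg]; ring
        have e2 : 4 * f a i y - 4 * f b i y = 4 * (f a i y - f b i y) := by ring
        rw [e, e2, abs_mul, abs_mul]
        have h1 : |f a i y + f b i y| ≤ 2 :=
          (abs_add_le _ _).trans (by linarith [hf1 a i y, hf1 b i y])
        have : |(4 : ℝ)| = 4 := by norm_num
        rw [this]
        nlinarith [abs_nonneg (f a i y - f b i y)])
    have e1 : ∀ x, TS (fun a i y => 4 * f a i y) x = 4 * TS f x := by
      intro x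
      simp only [TS, ← Finset.mul_sum]
      rw [Real.mul_iSup_of_nonneg (by norm_num)]
    have e2 : ∀ x, TS (fun a i y => - (4 * f a i y)) x = 4 * TS (fun a i y => - f a i y) x := by
      intro x
      have : ∀ a i (y : 𝒳 i), - (4 * f a i y) = 4 * (- f a i y) := fun a i y => by ring
      simp only [TS, this, ← Finset.mul_sum]
      rw [Real.mul_iSup_of_nonneg (by norm_num)]
    simp only [e1, e2, integral_const_mul, ← hQ] at c
    have bc : BM (TS (fun a i y => g a i y - ∫ y', g a i y' ∂(P i))) :=
      TS_BM fun a i => (hgb a i).sub (BM.const _)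
    have d := integral_mono (μ := Q) (hW.int _) ((bc.add (BM.const σ)).int _) (by
      intro x
      refine ciSup_le fun a => ?_
      have t := fin_le_iSup (fun a => ∑ i, (g a i (x i) - ∫ y', g a i y' ∂(P i))) a
      have t2 := hσ a
      simp only [Finset.sum_sub_distrib] at t
      simp only [TS, Finset.sum_sub_distrib]
      linarith)
    rw [integral_add (bc.int _) (integrable_const _)] at d
    simp only [integral_const, probReal_univ, smul_eq_mul, one_mul] at d
    linarith
  have hEW0 : 0 ≤ ∫ x, TS g x ∂Q := integral_nonneg fun x => by
    obtain ⟨a⟩ := ‹Nonempty ι›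
    exact (Finset.sum_nonneg fun i _ => hg0 a i (x i)).trans
      (fin_le_iSup (fun a => ∑ i, g a i (x i)) a)
  have hKW := cgf_selfbounding P hgb hg0 hg1
  rw [← hQ] at hKW
  -- variance bound
  have hv : ∀ x, ∑ i, ∫ y, (max (TS f x - TS f (Function.update x i y)) 0) ^ 2 ∂(P i) ≤
      TS g x + σ := by
    intro x
    obtain ⟨a, ha⟩ := exists_eq_ciSup_of_finite (f := fun a => ∑ i, f a i (x i))
    have ha' : ∑ i, f a i (x i) = TS f x := ha
    have step : ∀ i, ∫ y, (max (TS f x - TS f (Function.update x i y)) 0) ^ 2 ∂(P i) ≤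
        g a i (x i) + ∫ y, f a i y ^ 2 ∂(P i) := by
      intro i
      have b : BM (fun y => (max (TS f x - TS f (Function.update x i y)) 0) ^ 2) :=
        (((BM.const _).sub (hZ.update_left i x)).max (BM.const 0)).pow 2
      have b2 : BM (fun y => f a i (x i) ^ 2 - 2 * f a i (x i) * f a i y + f a i y ^ 2) :=
        ((BM.const _).sub ((BM.const _).mul (hf a i))).add ((hf a i).pow 2)
      have := integral_mono (b.int (P i)) (b2.int (P i)) (fun y => by
        have h1 := max_sq_le_aux (TS_sub_update_le x a ha' i y)
        simp only []
        nlinarith)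
      rw [integral_add (((BM.const _).sub ((BM.const _).mul (hf a i))).int _)
        (((hf a i).pow 2).int _), integral_sub (integrable_const _)
        (((BM.const _).mul (hf a i)).int _), integral_const_mul, hf0] at this
      simpa [hg] using this
    refine (Finset.sum_le_sum fun i _ => step i).trans ?_
    rw [Finset.sum_add_distrib]
    exact add_le_add (fin_le_iSup (fun a => ∑ i, g a i (x i)) a) (hσ a)
  have hVb : BM (fun x => TS g x + σ) := hW.add (BM.const σ)
  set v : ℝ := σ + 2 * ∫ x, TS g x ∂Q with hvdef
  have hv0 : 0 ≤ v := by positivity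
  have hH := herbst Q hZ (R := fun l => 2 * v * l) (r := fun _ => 2 * v) (L := 1 / 2)
    (fun l => by simpa using (hasDerivAt_id l).const_mul (2 * v)) (by
      intro l hl hl2
      have hb := entropy_bound_cgf P hZ hVb hv hl
      rw [← hQ] at hb
      have hpos : 0 < mgf (TS f) Q l := integral_exp_pos_of_BM Q ((BM.const l).mul hZ)
      set Ent := l * deriv (cgf (TS f) Q) l - cgf (TS f) Q l with hEnt
      set M := mgf (TS f) Q l with hM
      have hlz : BM (fun x => l * TS f x) := (BM.const l).mul hZ
      have hw2 : BM (fun x => 1 / 2 * TS g x) := (BM.const _).mul hW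
      obtain ⟨C, hC⟩ := hw2.2
      have hd := entropy_dual Q hlz hw2.exp (c := Real.exp (-C)) (Real.exp_pos _)
        (fun x => Real.exp_le_exp.2 (abs_le.1 (hC x)).1)
      rw [entropy_cgf Q hZ l] at hd
      have ek : Real.log (∫ x, Real.exp (1 / 2 * TS g x) ∂Q) = cgf (TS g) Q (1 / 2) := rfl
      rw [ek] at hd
      simp only [Real.log_exp, mul_sub] at hd
      have hM' : ∫ x, Real.exp (l * TS f x) ∂Q = M := rfl
      rw [integral_sub ((hlz.exp.mul hw2).int _) ((hlz.exp.mul (BM.const _)).int _),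
        integral_mul_const, hM'] at hd
      have e3 : ∫ x, Real.exp (l * TS f x) * (1 / 2 * TS g x) ∂Q =
          1 / 2 * ∫ x, Real.exp (l * TS f x) * TS g x ∂Q := by
        rw [← integral_const_mul]; congr 1; ext x; ring
      rw [e3] at hd
      simp only [mul_add] at hb
      rw [integral_add ((hlz.exp.mul hW).int _) ((hlz.exp.mul (BM.const _)).int _),
        integral_mul_const, hM'] at hb
      set J := ∫ x, Real.exp (l * TS f x) * TS g x ∂Q
      set w := ∫ x, TS g x ∂Q
      set kw := cgf (TS g) Q (1 / 2)
      have hd' : J ≤ 2 * (M * Ent) + 2 * (M * kw) := by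
        have : M * Ent = M * (l * deriv (cgf (TS f) Q) l) - M * cgf (TS f) Q l := by
          rw [hEnt]; ring
        linarith
      have hd2 : J ≤ 2 * (M * Ent) + 2 * (M * w) := by
        have := mul_le_mul_of_nonneg_left hKW hpos.le
        linarith
      have hb' : M * Ent ≤ l ^ 2 * (J + M * σ) := by
        have : M * Ent = M * (l * deriv (cgf (TS f) Q) l) - M * cgf (TS f) Q l := by
          rw [hEnt]; ring
        linarith
      have hb2 : M * Ent ≤ M * (l ^ 2 * (2 * Ent + v)) := by
        refine hb'.trans ?_
        have := mul_le_mul_of_nonneg_left (add_le_add_left hd2 (M * σ)) (sq_nonneg l)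
        refine this.trans (le_of_eq ?_)
        rw [hvdef]; ring
      have hb3 := le_of_mul_le_mul_left hb2 hpos
      have hl4 : l ^ 2 ≤ 1 / 4 := by nlinarith
      rcases le_total Ent 0 with h0 | h0
      · exact h0.trans (by positivity)
      · nlinarith) l hl hl2
  simp only [mul_zero, sub_zero] at hH
  refine hH.trans (mul_le_mul_of_nonneg_left (add_le_add hB1 ?_) hl.le)
  have : v ≤ 3 * σ + 16 * B := by rw [hvdef]; linarith
  nlinarith

/-- Tail bound for the supremum over a finite class. -/
theorem tail_sup_le (P : ∀ i, Measure (𝒳 i)) [∀ i, IsProbabilityMeasure (P i)]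
    {f : ι → ∀ i, 𝒳 i → ℝ} (hf : ∀ a i, BM (f a i)) (hf1 : ∀ a i y, |f a i y| ≤ 1)
    (hf0 : ∀ a i, ∫ y, f a i y ∂(P i) = 0) {σ B : ℝ}
    (hσ : ∀ a, ∑ i, ∫ y, f a i y ^ 2 ∂(P i) ≤ σ)
    (hB1 : ∫ x, TS f x ∂(Measure.pi P) ≤ B)
    (hB2 : ∫ x, TS (fun a i y => - f a i y) x ∂(Measure.pi P) ≤ B)
    {l : ℝ} (hl : 0 < l) (hl2 : l ≤ 1 / 2) {u ξ : ℝ}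
    (hu : B + 2 * (3 * σ + 16 * B) * l + ξ / l ≤ u) :
    (Measure.pi P) {x | u ≤ TS f x} ≤ ENNReal.ofReal (Real.exp (-ξ)) := by
  have h := cgf_sup_le P hf hf1 hf0 hσ hB1 hB2 hl hl2
  have hZ := TS_BM hf
  have t := measure_ge_le_exp_cgf (μ := Measure.pi P) (X := TS f) u hl.le
    (((BM.const l).mul hZ).exp.int _)
  have t2 : (Measure.pi P).real {x | u ≤ TS f x} ≤ Real.exp (-ξ) := by
    refine t.trans (Real.exp_le_exp.2 ?_)
    have := mul_le_mul_of_nonneg_left hu hl.le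
    have e : l * (B + 2 * (3 * σ + 16 * B) * l + ξ / l) =
      l * (B + 2 * (3 * σ + 16 * B) * l) + ξ := by field_simp
    rw [e] at this
    linarith
  rw [← ofReal_measureReal]
  exact ENNReal.ofReal_le_ofReal t2

end Concentration

/-! ### Pointwise inequalities and Hellinger bounds -/

theorem psiR_eq {a b : ℝ} (ha : 0 ≤ a) (hb0 : 0 ≤ b) :
    psiR a b = (√b - √a) / (√b + √a) := by
  unfold psiR
  by_cases h : a = 0
  · subst h
    by_cases hb : b = 0
    · simp [hb]
    · rw [if_pos rfl, if_neg hb]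
      have hb' : √b ≠ 0 := (Real.sqrt_pos.2 (lt_of_le_of_ne hb0 (Ne.symm hb))).ne'
      simp [hb']
  · have hpos : 0 < √a := Real.sqrt_pos.2 (lt_of_le_of_ne ha (Ne.symm h))
    have hb := Real.sqrt_nonneg b
    rw [if_neg h, Real.sqrt_div' _ ha]
    field_simp

theorem psi_aux1 {a b c : ℝ} (ha : 0 ≤ a) (hb : 0 ≤ b) :
    c ^ 2 * ((b - a) / (b + a)) ≤
      2 * (c - a) ^ 2 - 3 / 16 * (c - b) ^ 2 + (b ^ 2 - a ^ 2) / 4 := by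
  rcases (add_nonneg hb ha).eq_or_lt with h | h
  · have ha0 : a = 0 := by linarith
    have hb0 : b = 0 := by linarith
    subst ha0 hb0
    simp only [sub_zero, add_zero, div_zero, mul_zero]
    nlinarith [sq_nonneg c]
  · rw [← mul_div_assoc, div_le_iff₀ h]
    set A := 45 / 16 * a + 13 / 16 * b with hA
    have hApos : 0 < A := by
      rw [hA]; nlinarith
    have hdisc : (a + b) * (4 * a - 3 / 8 * b) ^ 2 ≤ 4 * A * (7 / 4 * a ^ 2 + b ^ 2 / 16) := by
      have : 4 * A * (7 / 4 * a ^ 2 + b ^ 2 / 16) - (a + b) * (4 * a - 3 / 8 * b) ^ 2 =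
        (a - b) ^ 2 * (59 * a + b) / 16 := by rw [hA]; ring
      have : 0 ≤ (a - b) ^ 2 * (59 * a + b) / 16 := by positivity
      linarith
    have key : 0 ≤ 4 * A * (A * c ^ 2 - (a + b) * (4 * a - 3 / 8 * b) * c
        + (a + b) * (7 / 4 * a ^ 2 + b ^ 2 / 16)) := by
      have e : 4 * A * (A * c ^ 2 - (a + b) * (4 * a - 3 / 8 * b) * c
        + (a + b) * (7 / 4 * a ^ 2 + b ^ 2 / 16)) =
        (2 * A * c - (a + b) * (4 * a - 3 / 8 * b)) ^ 2 + (a + b) *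
          (4 * A * (7 / 4 * a ^ 2 + b ^ 2 / 16) - (a + b) * (4 * a - 3 / 8 * b) ^ 2) := by ring
      rw [e]
      have := mul_nonneg (by linarith : 0 ≤ a + b) (sub_nonneg.2 hdisc)
      positivity
    have key2 := nonneg_of_mul_nonneg_right key (by linarith : 0 < 4 * A)
    rw [hA] at key2
    linarith

theorem psi_aux2 {a b c : ℝ} (ha : 0 ≤ a) (hb : 0 ≤ b) :
    c ^ 2 * ((b - a) / (b + a)) ^ 2 ≤ (c - a) ^ 2 + (c - b) ^ 2 := by
  rcases (add_nonneg hb ha).eq_or_lt with h | h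
  · rw [← h]
    simp only [div_zero]
    nlinarith [sq_nonneg (c - a), sq_nonneg (c - b)]
  · rw [div_pow, ← mul_div_assoc, div_le_iff₀ (by positivity)]
    set p := b + a with hp
    set d := b - a with hd
    have hdp : d ^ 2 ≤ p ^ 2 := by rw [hp, hd]; nlinarith [mul_nonneg ha hb]
    have hA : 0 < 2 * p ^ 2 - d ^ 2 := by nlinarith [sq_pos_of_pos h]
    have e1 : (c - a) ^ 2 + (c - b) ^ 2 = 2 * c ^ 2 - 2 * p * c + (p ^ 2 + d ^ 2) / 2 := by
      rw [hp, hd]; ring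
    rw [e1]
    have key : 0 ≤ (2 * p ^ 2 - d ^ 2) * ((2 * c ^ 2 - 2 * p * c + (p ^ 2 + d ^ 2) / 2) * p ^ 2
        - c ^ 2 * d ^ 2) := by
      have e : (2 * p ^ 2 - d ^ 2) * ((2 * c ^ 2 - 2 * p * c + (p ^ 2 + d ^ 2) / 2) * p ^ 2
        - c ^ 2 * d ^ 2) = ((2 * p ^ 2 - d ^ 2) * c - p ^ 3) ^ 2
          + p ^ 2 * d ^ 2 * (p ^ 2 - d ^ 2) / 2 := by ring
      rw [e]
      have := sub_nonneg.2 hdp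
      positivity
    have := nonneg_of_mul_nonneg_right key hA
    linarith

theorem psi_abs_le {a b : ℝ} (ha : 0 ≤ a) (hb : 0 ≤ b) : |psiR a b| ≤ 1 := by
  rw [psiR_eq ha hb, abs_div]
  have h1 := Real.sqrt_nonneg a
  have h2 := Real.sqrt_nonneg b
  refine div_le_one_of_le₀ ?_ (abs_nonneg _)
  rw [abs_of_nonneg (add_nonneg h2 h1), abs_le]
  constructor <;> linarith

theorem psiR_measurable : Measurable (fun p : ℝ × ℝ => psiR p.1 p.2) := by
  unfold psiR
  refine Measurable.ite (measurableSet_eq_fun measurable_fst measurable_const) ?_ ?_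
  · exact Measurable.ite (measurableSet_eq_fun measurable_snd measurable_const)
      measurable_const measurable_const
  · have : Measurable (fun p : ℝ × ℝ => √(p.2 / p.1)) := (measurable_snd.div measurable_fst).sqrt
    exact (this.sub_const 1).div (this.add_const 1)

section Hellinger
variable {X : Type*} [MeasurableSpace X] {ν : Measure X} {s t t' : X → ℝ}

/-- A probability density. -/
def IsDens {X : Type*} [MeasurableSpace X] (ν : Measure X) (t : X → ℝ) : Prop :=
  Measurable t ∧ (∀ x, 0 ≤ t x) ∧ ∫⁻ x, ENNReal.ofReal (t x) ∂ν = 1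

theorem IsDens.int (h : IsDens ν t) : Integrable t ν := by
  refine ⟨h.1.aestronglyMeasurable, ?_⟩
  rw [hasFiniteIntegral_iff_ofReal (Eventually.of_forall h.2.1), h.2.2]
  simp

theorem IsDens.integral (h : IsDens ν t) : ∫ x, t x ∂ν = 1 := by
  rw [integral_eq_lintegral_of_nonneg_ae (Eventually.of_forall h.2.1) h.1.aestronglyMeasurable,
    h.2.2]
  simp

theorem IsDens.sq_int (hs : IsDens ν s) (ht : IsDens ν t) :
    Integrable (fun x => (√(s x) - √(t x)) ^ 2) ν := by
  refine Integrable.mono' ((hs.int.const_mul 2).add (ht.int.const_mul 2))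
    ((hs.1.sqrt.sub ht.1.sqrt).pow_const 2).aestronglyMeasurable (Eventually.of_forall fun x => ?_)
  have h1 := Real.sq_sqrt (hs.2.1 x)
  have h2 := Real.sq_sqrt (ht.2.1 x)
  rw [Real.norm_eq_abs, abs_of_nonneg (sq_nonneg _)]
  simp only [Pi.add_apply]
  nlinarith [sq_nonneg (√(s x) + √(t x))]

theorem hellSq_nonneg (ν : Measure X) (s t : X → ℝ) : 0 ≤ hellSq ν s t :=
  mul_nonneg (by norm_num) (integral_nonneg fun x => sq_nonneg _)

theorem IsDens.prob (hs : IsDens ν s) :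
    IsProbabilityMeasure (ν.withDensity fun x => ENNReal.ofReal (s x)) :=
  ⟨by rw [withDensity_apply _ MeasurableSet.univ, Measure.restrict_univ, hs.2.2]⟩

theorem IsDens.integral_wd (hs : IsDens ν s) (g : X → ℝ) :
    ∫ x, g x ∂(ν.withDensity fun x => ENNReal.ofReal (s x)) = ∫ x, s x * g x ∂ν := by
  rw [integral_withDensity_eq_integral_toReal_smul hs.1.ennreal_ofReal (by simp)]
  congr 1
  ext x
  rw [ENNReal.toReal_ofReal (hs.2.1 x), smul_eq_mul]

theorem IsDens.psiBM (ht : IsDens ν t) (ht' : IsDens ν t') : BM (fun x => psiR (t x) (t' x)) :=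
  ⟨psiR_measurable.comp (ht.1.prodMk ht'.1), 1, fun x => psi_abs_le (ht.2.1 x) (ht'.2.1 x)⟩

theorem IsDens.mul_int (hs : IsDens ν s) {g : X → ℝ} (hg : BM g) :
    Integrable (fun x => s x * g x) ν := by
  obtain ⟨hm, C, hC⟩ := hg
  have := hs.int.bdd_mul (c := C) hm.aestronglyMeasurable (Eventually.of_forall hC)
  simpa [mul_comm] using this

theorem psi_mean_le (hs : IsDens ν s) (ht : IsDens ν t) (ht' : IsDens ν t') :
    ∫ x, psiR (t x) (t' x) ∂(ν.withDensity fun x => ENNReal.ofReal (s x)) ≤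
      4 * hellSq ν s t - 3 / 8 * hellSq ν s t' := by
  rw [hs.integral_wd]
  have i1 := (hs.sq_int ht).const_mul 2
  have i2 := (hs.sq_int ht').const_mul (3 / 16)
  have i3 := (ht'.int.sub ht.int).div_const 4
  have := integral_mono (hs.mul_int (ht.psiBM ht')) ((i1.sub i2).add i3) (fun x => by
    have := psi_aux1 (c := √(s x)) (Real.sqrt_nonneg (t x)) (Real.sqrt_nonneg (t' x))
    rw [← psiR_eq (ht.2.1 x) (ht'.2.1 x), Real.sq_sqrt (hs.2.1 x), Real.sq_sqrt (ht.2.1 x),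
      Real.sq_sqrt (ht'.2.1 x)] at this
    exact this)
  refine this.trans (le_of_eq ?_)
  rw [integral_add' (i1.sub i2) i3, integral_sub' i1 i2, integral_const_mul, integral_const_mul]
  have : ∫ x, (t' - t) x / 4 ∂ν = 0 := by
    rw [integral_div, integral_sub' ht'.int ht.int, ht.integral, ht'.integral]; simp
  rw [this]
  unfold hellSq
  ring

theorem psi_sq_le (hs : IsDens ν s) (ht : IsDens ν t) (ht' : IsDens ν t') :
    ∫ x, psiR (t x) (t' x) ^ 2 ∂(ν.withDensity fun x => ENNReal.ofReal (s x)) ≤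
      2 * hellSq ν s t + 2 * hellSq ν s t' := by
  rw [hs.integral_wd]
  have i1 := hs.sq_int ht
  have i2 := hs.sq_int ht'
  have := integral_mono (hs.mul_int ((ht.psiBM ht').pow 2)) (i1.add i2) (fun x => by
    have := psi_aux2 (c := √(s x)) (Real.sqrt_nonneg (t x)) (Real.sqrt_nonneg (t' x))
    rw [← psiR_eq (ht.2.1 x) (ht'.2.1 x), Real.sq_sqrt (hs.2.1 x)] at this
    exact this)
  refine this.trans (le_of_eq ?_)
  rw [integral_add' i1 i2]
  unfold hellSq
  ring

theorem hellSq_quasi (hs : IsDens ν s) (ht : IsDens ν t) (ht' : IsDens ν t') {η : ℝ} (hη : 0 < η) :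
    hellSq ν s t' ≤ (1 + η) * hellSq ν s t + (1 + 1 / η) * hellSq ν t t' := by
  have i1 := (hs.sq_int ht).const_mul (1 + η)
  have i2 := (ht.sq_int ht').const_mul (1 + 1 / η)
  have := integral_mono (hs.sq_int ht') (i1.add i2) (fun x => by
    have key : ∀ p q : ℝ, (p + q) ^ 2 ≤ (1 + η) * p ^ 2 + (1 + 1 / η) * q ^ 2 := by
      intro p q
      have : (1 + η) * p ^ 2 + (1 + 1 / η) * q ^ 2 - (p + q) ^ 2 = (η * p - q) ^ 2 / η := by
        field_simp; ring
      have : 0 ≤ (η * p - q) ^ 2 / η := by positivity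
      linarith
    have := key (√(s x) - √(t x)) (√(t x) - √(t' x))
    rw [sub_add_sub_cancel] at this
    exact this)
  rw [integral_add' i1 i2, integral_const_mul, integral_const_mul] at this
  unfold hellSq
  linarith

end Hellinger

section HellProd
variable {n : ℕ} {𝒳 : Fin n → Type*} [∀ i, MeasurableSpace (𝒳 i)] {μ : ∀ i, Measure (𝒳 i)}
  {s t t' : ∀ i, 𝒳 i → ℝ}

theorem IsDensityT.dens (h : IsDensityT μ t) (i : Fin n) : IsDens (μ i) (t i) := h i

theorem bH_sq (μ : ∀ i, Measure (𝒳 i)) (s t : ∀ i, 𝒳 i → ℝ) :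
    bH μ s t ^ 2 = ∑ i, hellSq (μ i) (s i) (t i) :=
  Real.sq_sqrt (Finset.sum_nonneg fun i _ => hellSq_nonneg _ _ _)

theorem bH_quasi (hs : IsDensityT μ s) (ht : IsDensityT μ t) (ht' : IsDensityT μ t') {η : ℝ}
    (hη : 0 < η) :
    bH μ s t' ^ 2 ≤ (1 + η) * bH μ s t ^ 2 + (1 + 1 / η) * bH μ t t' ^ 2 := by
  simp only [bH_sq, Finset.mul_sum, ← Finset.sum_add_distrib]
  exact Finset.sum_le_sum fun i _ => hellSq_quasi (hs.dens i) (ht.dens i) (ht'.dens i) hη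

theorem integral_eval {P : ∀ i, Measure (𝒳 i)} [∀ i, IsProbabilityMeasure (P i)] (i : Fin n)
    {g : 𝒳 i → ℝ} (hg : BM g) : ∫ x, g (x i) ∂(Measure.pi P) = ∫ y, g y ∂(P i) := by
  rw [← (measurePreserving_eval P i).map_eq, integral_map (measurable_pi_apply i).aemeasurable
    hg.1.aestronglyMeasurable]

theorem Psi_BM (ht : IsDensityT μ t) (ht' : IsDensityT μ t') : BM (fun x => Psi x t t') :=
  BM.sum _ fun i _ => ((ht.dens i).psiBM (ht'.dens i)).comp (measurable_pi_apply i)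

theorem Psi_integral (hs : IsDensityT μ s) (ht : IsDensityT μ t) (ht' : IsDensityT μ t') :
    ∫ x, Psi x t t' ∂(Plaw μ s) = ∑ i, ∫ y, psiR (t i y) (t' i y)
      ∂((μ i).withDensity fun x => ENNReal.ofReal (s i x)) := by
  haveI := fun i => (hs.dens i).prob
  unfold Psi Plaw
  rw [integral_finsetSum _ fun i _ =>
    (((ht.dens i).psiBM (ht'.dens i)).comp (measurable_pi_apply i)).int _]
  refine Finset.sum_congr rfl fun i _ => ?_
  exact integral_eval (P := fun i => (μ i).withDensity fun x => ENNReal.ofReal (s i x)) i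
    ((ht.dens i).psiBM (ht'.dens i))

theorem Psi_mean_le (hs : IsDensityT μ s) (ht : IsDensityT μ t) (ht' : IsDensityT μ t') :
    ∫ x, Psi x t t' ∂(Plaw μ s) ≤ 4 * bH μ s t ^ 2 - 3 / 8 * bH μ s t' ^ 2 := by
  rw [Psi_integral hs ht ht', bH_sq, bH_sq, Finset.mul_sum, Finset.mul_sum,
    ← Finset.sum_sub_distrib]
  exact Finset.sum_le_sum fun i _ => psi_mean_le (hs.dens i) (ht.dens i) (ht'.dens i)

theorem Psi_abs_le (ht : IsDensityT μ t) (ht' : IsDensityT μ t') (x : ∀ i, 𝒳 i) : |Psi x t t'| ≤ n := by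
  unfold Psi
  refine (Finset.abs_sum_le_sum_abs _ _).trans ?_
  refine (Finset.sum_le_sum fun i _ => psi_abs_le ((ht.dens i).2.1 (x i)) ((ht'.dens i).2.1 (x i))).trans ?_
  simp

theorem Plaw_prob (hs : IsDensityT μ s) : IsProbabilityMeasure (Plaw μ s) := by
  haveI := fun i => (hs.dens i).prob
  unfold Plaw
  infer_instance

theorem Psi_mean_abs_le (hs : IsDensityT μ s) (ht : IsDensityT μ t) (ht' : IsDensityT μ t') :
    |∫ x, Psi x t t' ∂(Plaw μ s)| ≤ n := by
  haveI := Plaw_prob hs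
  have := norm_integral_le_of_norm_le_const (μ := Plaw μ s) (f := fun x => Psi x t t') (C := n)
    (Eventually.of_forall fun x => Psi_abs_le ht ht' x)
  simpa using this

end HellProd

section Final

variable {n : ℕ} {𝒳 : Fin n → Type*} [∀ i, MeasurableSpace (𝒳 i)]
  {μ : ∀ i, Measure (𝒳 i)} {s t t' : ∀ i, 𝒳 i → ℝ} {S : Set (∀ i, 𝒳 i → ℝ)}

/-- centred process -/
def Zc (μ : ∀ i, Measure (𝒳 i)) (s t t' : ∀ i, 𝒳 i → ℝ) (x : ∀ i, 𝒳 i) : ℝ :=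
  Psi x t t' - ∫ x', Psi x' t t' ∂(Plaw μ s)

/-- pairs in the ball of radius `y` -/
abbrev TB (μ : ∀ i, Measure (𝒳 i)) (s : ∀ i, 𝒳 i → ℝ) (S : Set (∀ i, 𝒳 i → ℝ)) (y : ℝ) :=
  {p : (∀ i, 𝒳 i → ℝ) × (∀ i, 𝒳 i → ℝ) //
      p.1 ∈ S ∧ p.2 ∈ S ∧ bH μ s p.1 ≤ y ∧ bH μ s p.2 ≤ y}

theorem TB_countable (hc : S.Countable) (y : ℝ) : Countable (TB μ s S y) := by
  have : Set.Countable {p : (∀ i, 𝒳 i → ℝ) × (∀ i, 𝒳 i → ℝ) |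
      p.1 ∈ S ∧ p.2 ∈ S ∧ bH μ s p.1 ≤ y ∧ bH μ s p.2 ≤ y} :=
    Set.Countable.mono (fun p hp => Set.mem_prod.2 ⟨hp.1, hp.2.1⟩) (Set.Countable.prod hc hc)
  exact this.to_subtype

theorem Zc_BM (ht : IsDensityT μ t) (ht' : IsDensityT μ t') : BM (Zc μ s t t') :=
  (Psi_BM ht ht').sub (BM.const _)

theorem Zc_abs_le (hs : IsDensityT μ s) (ht : IsDensityT μ t) (ht' : IsDensityT μ t')
    (x : ∀ i, 𝒳 i) : |Zc μ s t t' x| ≤ 2 * n := by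
  have h1 := abs_le.1 (Psi_abs_le ht ht' x)
  have h2 := abs_le.1 (Psi_mean_abs_le hs ht ht')
  unfold Zc
  rw [abs_le]
  constructor <;> linarith

theorem supZ_BM (hs : IsDensityT μ s) (hS : ∀ t ∈ S, IsDensityT μ t) (hc : S.Countable) (y : ℝ) :
    BM (fun x => ⨆ p : TB μ s S y, |Zc μ s p.1.1 p.1.2 x|) := by
  have := TB_countable (μ := μ) (s := s) hc y
  refine ⟨Measurable.iSup fun p => (Zc_BM (hS _ p.2.1) (hS _ p.2.2.1)).1.abs, 2 * n, fun x => ?_⟩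
  rw [abs_of_nonneg (Real.iSup_nonneg fun p => abs_nonneg _)]
  exact Real.iSup_le (fun p => Zc_abs_le hs (hS _ p.2.1) (hS _ p.2.2.1) x) (by positivity)

theorem le_supZ (hs : IsDensityT μ s) (hS : ∀ t ∈ S, IsDensityT μ t) (y : ℝ)
    (p : TB μ s S y) (x : ∀ i, 𝒳 i) :
    |Zc μ s p.1.1 p.1.2 x| ≤ ⨆ p : TB μ s S y, |Zc μ s p.1.1 p.1.2 x| := by
  refine le_ciSup (f := fun p : TB μ s S y => |Zc μ s p.1.1 p.1.2 x|) ⟨2 * n, ?_⟩ p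
  rintro _ ⟨q, rfl⟩
  exact Zc_abs_le hs (hS _ q.2.1) (hS _ q.2.2.1) x

theorem wS_eq (y : ℝ) (h : Nonempty (TB μ s S y)) :
    wS μ s S y = ∫ x, (⨆ p : TB μ s S y, |Zc μ s p.1.1 p.1.2 x|) ∂(Plaw μ s) := by
  unfold wS
  rw [if_pos h]
  rfl

theorem wS_le (hs : IsDensityT μ s) (hS : ∀ t ∈ S, IsDensityT μ t) (hc : S.Countable) (y : ℝ) :
    wS μ s S y ≤ 2 * n + 1 := by
  have := Plaw_prob hs
  by_cases h : Nonempty (TB μ s S y)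
  · rw [wS_eq y h]
    have := integral_mono ((supZ_BM hs hS hc y).int (Plaw μ s)) (integrable_const (2 * n : ℝ))
      (fun x => Real.iSup_le (fun p => Zc_abs_le hs (hS _ p.2.1) (hS _ p.2.2.1) x) (by positivity))
    simp at this
    linarith
  · unfold wS
    rw [if_neg h]
    have : (0 : ℝ) ≤ n := by positivity
    linarith

theorem epsS_nonneg : 0 ≤ epsS μ s S :=
  Real.sSup_nonneg fun y hy => by linarith [hy.1]

theorem wS_of_gt (hs : IsDensityT μ s) (hS : ∀ t ∈ S, IsDensityT μ t) (hc : S.Countable) {y : ℝ}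
    (hy1 : 1 ≤ y) (hy : epsS μ s S < y) : wS μ s S y ≤ 6 / 1000 * y ^ 2 := by
  by_contra hcon
  push Not at hcon
  refine absurd hy (not_lt.2 (le_csSup ⟨(2 * n + 1) / (6 / 1000), ?_⟩ ⟨hy1, hcon⟩))
  rintro z ⟨hz1, hz⟩
  rw [le_div_iff₀ (by norm_num)]
  nlinarith [wS_le hs hS hc z]

theorem tail_fin (hs : IsDensityT μ s) (hS : ∀ t ∈ S, IsDensityT μ t) (hc : S.Countable)
    {y ξ : ℝ} (hw : wS μ s S y ≤ 6 / 1000 * y ^ 2)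
    {ι : Type} [Finite ι] [Nonempty ι] (e : ι → TB μ s S y) :
    Plaw μ s {x | ∃ a, 7 / 1000 * y ^ 2 + 24400 * ξ ≤ Zc μ s (e a).1.1 (e a).1.2 x} ≤
      ENNReal.ofReal (Real.exp (-ξ)) := by
  have := fun i => (hs.dens i).prob
  have := Plaw_prob hs
  set P : ∀ i, Measure (𝒳 i) := fun i => (μ i).withDensity fun x => ENNReal.ofReal (s i x) with hP
  have hPl : Plaw μ s = Measure.pi P := rfl
  have d1 : ∀ a, IsDensityT μ (e a).1.1 := fun a => hS _ (e a).2.1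
  have d2 : ∀ a, IsDensityT μ (e a).1.2 := fun a => hS _ (e a).2.2.1
  let g : ι → ∀ i, 𝒳 i → ℝ := fun a i z => psiR ((e a).1.1 i z) ((e a).1.2 i z)
  have hg : ∀ a i, BM (g a i) := fun a i => ((d1 a).dens i).psiBM ((d2 a).dens i)
  have hg1 : ∀ a i z, |g a i z| ≤ 1 := fun a i z =>
    psi_abs_le (((d1 a).dens i).2.1 z) (((d2 a).dens i).2.1 z)
  let f : ι → ∀ i, 𝒳 i → ℝ := fun a i z => (1 / 2) * (g a i z - ∫ w, g a i w ∂(P i))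
  have hf : ∀ a i, BM (f a i) := fun a i => (BM.const _).mul ((hg a i).sub (BM.const _))
  have hm1 : ∀ a i, |∫ w, g a i w ∂(P i)| ≤ 1 := fun a i => by
    have := norm_integral_le_of_norm_le_const (μ := P i) (f := g a i) (C := 1)
      (Eventually.of_forall fun x => hg1 a i x)
    simpa using this
  have hf1 : ∀ a i z, |f a i z| ≤ 1 := fun a i z => by
    have h1 := abs_le.1 (hg1 a i z)
    have h2 := abs_le.1 (hm1 a i)
    simp only [f]
    rw [abs_le]
    constructor <;> linarith
  have hf0 : ∀ a i, ∫ z, f a i z ∂(P i) = 0 := fun a i => by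
    simp only [f]
    rw [integral_const_mul, integral_sub ((hg a i).int _) (integrable_const _)]
    simp
  have hfs : ∀ a x, ∑ i, f a i (x i) = (1 / 2) * Zc μ s (e a).1.1 (e a).1.2 x := fun a x => by
    simp only [f, Zc]
    rw [← Finset.mul_sum, Finset.sum_sub_distrib, Psi_integral hs (d1 a) (d2 a)]
    rfl
  have hσ : ∀ a, ∑ i, ∫ z, f a i z ^ 2 ∂(P i) ≤ y ^ 2 := fun a => by
    have key : ∀ i, ∫ z, f a i z ^ 2 ∂(P i) ≤
        (1 / 2) * (hellSq (μ i) (s i) ((e a).1.1 i) + hellSq (μ i) (s i) ((e a).1.2 i)) := by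
      intro i
      have h1 := psi_sq_le (hs.dens i) ((d1 a).dens i) ((d2 a).dens i)
      have h2 : ∫ z, f a i z ^ 2 ∂(P i) =
          (1 / 4) * (∫ z, g a i z ^ 2 ∂(P i) - (∫ w, g a i w ∂(P i)) ^ 2) := by
        set m := ∫ w, g a i w ∂(P i) with hm
        have : ∀ z, f a i z ^ 2 = (1 / 4) * (g a i z ^ 2 - 2 * m * g a i z + m ^ 2) := fun z => by
          simp only [f, ← hm]; ring
        simp only [this]
        have i0 : Integrable (fun z => g a i z ^ 2 - 2 * m * g a i z) (P i) :=
          (((hg a i).pow 2).int _).sub (((hg a i).int _).const_mul _)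
        rw [integral_const_mul, integral_add i0 (integrable_const _),
          integral_sub (((hg a i).pow 2).int _) (((hg a i).int _).const_mul _),
          integral_const_mul, ← hm]
        simp
        ring
      rw [h2]
      have h3 : ∫ z, g a i z ^ 2 ∂(P i) ≤
        2 * hellSq (μ i) (s i) ((e a).1.1 i) + 2 * hellSq (μ i) (s i) ((e a).1.2 i) := h1
      nlinarith [sq_nonneg (∫ w, g a i w ∂(P i))]
    refine (Finset.sum_le_sum fun i _ => key i).trans ?_
    rw [← Finset.mul_sum, Finset.sum_add_distrib, ← bH_sq, ← bH_sq]
    have h1 := (e a).2.2.2.1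
    have h2 := (e a).2.2.2.2
    have h3 : 0 ≤ bH μ s (e a).1.1 := Real.sqrt_nonneg _
    have h4 : 0 ≤ bH μ s (e a).1.2 := Real.sqrt_nonneg _
    have h5 := pow_le_pow_left₀ h3 h1 2
    have h6 := pow_le_pow_left₀ h4 h2 2
    linarith
  have hne : Nonempty (TB μ s S y) := ⟨e (Classical.arbitrary ι)⟩
  rw [wS_eq y hne] at hw
  have hIs := (supZ_BM hs hS hc y).int (Plaw μ s)
  have hB1 : ∫ x, TS f x ∂(Measure.pi P) ≤ 3 / 1000 * y ^ 2 := by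
    have := integral_mono ((TS_BM hf).int (Measure.pi P)) (hIs.const_mul (1 / 2)) (fun x => by
      refine ciSup_le fun a => ?_
      rw [hfs]
      exact mul_le_mul_of_nonneg_left ((le_abs_self _).trans (le_supZ hs hS y (e a) x))
        (by norm_num))
    rw [integral_const_mul, ← hPl] at this
    rw [← hPl]
    linarith
  have hB2 : ∫ x, TS (fun a i z => - f a i z) x ∂(Measure.pi P) ≤ 3 / 1000 * y ^ 2 := by
    have := integral_mono ((TS_BM (fun a i => (hf a i).neg)).int (Measure.pi P))
      (hIs.const_mul (1 / 2)) (fun x => by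
      refine ciSup_le fun a => ?_
      rw [Finset.sum_neg_distrib, hfs, ← mul_neg]
      exact mul_le_mul_of_nonneg_left ((neg_le_abs _).trans (le_supZ hs hS y (e a) x))
        (by norm_num))
    rw [integral_const_mul, ← hPl] at this
    rw [← hPl]
    linarith
  have hfin := tail_sup_le P hf hf1 hf0 hσ hB1 hB2 (l := 1 / 12200) (by norm_num) (by norm_num)
    (u := (7 / 1000 * y ^ 2 + 24400 * ξ) / 2) (ξ := ξ) (by
      nlinarith [sq_nonneg y])
  refine le_trans (measure_mono ?_) hfin
  rintro x ⟨a, ha⟩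
  have := fin_le_iSup (fun a => ∑ i, f a i (x i)) a
  simp only [hfs] at this
  simp only [Set.mem_setOf_eq, TS, hfs]
  linarith

/-- bad event -/
def bad (μ : ∀ i, Measure (𝒳 i)) (s : ∀ i, 𝒳 i → ℝ) (S : Set (∀ i, 𝒳 i → ℝ)) (y ξ : ℝ) :
    Set (∀ i, 𝒳 i) :=
  ⋃ p : TB μ s S y, {x | 7 / 1000 * y ^ 2 + 24400 * ξ ≤ Zc μ s p.1.1 p.1.2 x}

theorem bad_meas (hS : ∀ t ∈ S, IsDensityT μ t) (hc : S.Countable) (y ξ : ℝ) :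
    MeasurableSet (bad μ s S y ξ) := by
  have := TB_countable (μ := μ) (s := s) hc y
  exact MeasurableSet.iUnion fun p =>
    measurableSet_le measurable_const (Zc_BM (hS _ p.2.1) (hS _ p.2.2.1)).1

theorem tail_bad (hs : IsDensityT μ s) (hS : ∀ t ∈ S, IsDensityT μ t) (hc : S.Countable)
    {y ξ : ℝ} (hw : wS μ s S y ≤ 6 / 1000 * y ^ 2) :
    Plaw μ s (bad μ s S y ξ) ≤ ENNReal.ofReal (Real.exp (-ξ)) := by
  have := TB_countable (μ := μ) (s := s) hc y
  by_cases h : Nonempty (TB μ s S y)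
  · obtain ⟨e, he⟩ := exists_surjective_nat (TB μ s S y)
    have hU : bad μ s S y ξ = ⋃ N : ℕ, {x | ∃ a : Fin (N + 1),
        7 / 1000 * y ^ 2 + 24400 * ξ ≤ Zc μ s (e a).1.1 (e a).1.2 x} := by
      ext x
      simp only [bad, Set.mem_iUnion, Set.mem_setOf_eq]
      constructor
      · rintro ⟨p, hp⟩
        obtain ⟨k, rfl⟩ := he p
        exact ⟨k, ⟨k, Nat.lt_succ_self k⟩, hp⟩
      · rintro ⟨N, a, ha⟩
        exact ⟨_, ha⟩
    rw [hU, Monotone.measure_iUnion]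
    · exact iSup_le fun N => tail_fin hs hS hc hw (fun a : Fin (N + 1) => e a)
    · rintro N M hNM x ⟨a, ha⟩
      exact ⟨⟨a, by have := a.2; omega⟩, ha⟩
  · rw [not_nonempty_iff] at h
    unfold bad
    simp

end Final

theorem peel_num (k : ℕ) : 24400 * ((k : ℝ) + 2) ≤ 168000 + 18750 * (5 / 4 : ℝ) ^ k := by
  by_cases hk : k ≤ 9
  · interval_cases k <;> norm_num
  · push Not at hk
    induction k, hk using Nat.le_induction with
    | base => norm_num
    | succ k hk ih =>
      have h9 : (5 / 4 : ℝ) ^ 10 ≤ (5 / 4 : ℝ) ^ k := pow_le_pow_right₀ (by norm_num) hk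
      rw [pow_succ]
      push_cast
      norm_num at h9
      linarith

section Final2

variable {n : ℕ} {𝒳 : Fin n → Type*} [∀ i, MeasurableSpace (𝒳 i)]
  {μ : ∀ i, Measure (𝒳 i)} {s t t' : ∀ i, 𝒳 i → ℝ} {S : Set (∀ i, 𝒳 i → ℝ)}

/-- peeling radii -/
def yr (ε : ℝ) (j : ℕ) : ℝ := √((5 / 4 : ℝ) ^ j * (ε ^ 2 + 15000000))

theorem yr_sq (ε : ℝ) (j : ℕ) : yr ε j ^ 2 = (5 / 4 : ℝ) ^ j * (ε ^ 2 + 15000000) :=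
  Real.sq_sqrt (by positivity)

theorem yr_ge (ε : ℝ) (j : ℕ) : ε ^ 2 + 15000000 ≤ yr ε j ^ 2 := by
  rw [yr_sq]
  have : (1 : ℝ) ≤ (5 / 4 : ℝ) ^ j := one_le_pow₀ (by norm_num)
  nlinarith [sq_nonneg ε]

theorem yr_nonneg (ε : ℝ) (j : ℕ) : 0 ≤ yr ε j := Real.sqrt_nonneg _

theorem sum_tail {ξ : ℝ} :
    ∑' j : ℕ, ENNReal.ofReal (Real.exp (-(ξ + j + 1))) ≤ ENNReal.ofReal (Real.exp (-ξ)) := by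
  have hg : HasSum (fun j : ℕ => Real.exp (-ξ) * ((1 / 2) * (1 / 2 : ℝ) ^ j)) (Real.exp (-ξ)) := by
    have := ((hasSum_geometric_of_lt_one (r := (1 / 2 : ℝ)) (by norm_num) (by norm_num)).mul_left
      (1 / 2)).mul_left (Real.exp (-ξ))
    rwa [show (1 / 2 * (1 - 1 / 2)⁻¹ : ℝ) = 1 by norm_num, mul_one] at this
  rw [← hg.tsum_eq, ENNReal.ofReal_tsum_of_nonneg (fun j => by positivity) hg.summable]
  refine ENNReal.tsum_le_tsum fun j => ENNReal.ofReal_le_ofReal ?_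
  have h1 : Real.exp (-1) ≤ 1 / 2 := by
    rw [Real.exp_neg, one_div]
    exact inv_anti₀ (by norm_num) (by linarith [Real.add_one_le_exp (1 : ℝ)])
  have h2 : Real.exp (-(ξ + j + 1)) = Real.exp (-ξ) * Real.exp (-1) ^ (j + 1) := by
    rw [← Real.exp_nat_mul, ← Real.exp_add]
    push_cast
    ring_nf
  rw [h2, ← pow_succ' (1 / 2 : ℝ) j]
  exact mul_le_mul_of_nonneg_left (pow_le_pow_left₀ (Real.exp_nonneg _) h1 _) (Real.exp_nonneg _)

theorem main_S (hs : IsDensityT μ s) (hS : ∀ t ∈ S, IsDensityT μ t) (hc : S.Countable)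
    {ξ : ℝ} (hξ : 0 < ξ) :
    ∃ Ω : Set (∀ i, 𝒳 i), MeasurableSet Ω ∧
      ENNReal.ofReal (1 - Real.exp (-ξ)) ≤ Plaw μ s Ω ∧
      ∀ x ∈ Ω, ∀ t ∈ S, ∀ t' ∈ S,
          Psi x t t' ≤ 4.01 * bH μ s t ^ 2 - 0.365 * bH μ s t' ^ 2
            + 16 / 1000 * epsS μ s S ^ 2 + 70000 * (ξ + 2.4) := by
  have := Plaw_prob hs
  set ε := epsS μ s S with hε
  have hε0 : 0 ≤ ε := epsS_nonneg
  let A : Set (∀ i, 𝒳 i) := ⋃ j : ℕ, bad μ s S (yr ε j) (ξ + j + 1)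
  have hA : MeasurableSet A := MeasurableSet.iUnion fun j => bad_meas hS hc _ _
  have hPA : Plaw μ s A ≤ ENNReal.ofReal (Real.exp (-ξ)) := by
    refine (measure_iUnion_le _).trans (le_trans (ENNReal.tsum_le_tsum fun j => ?_) sum_tail)
    refine tail_bad hs hS hc (wS_of_gt hs hS hc ?_ ?_)
    · have h1 := yr_ge ε j
      have h2 := yr_nonneg ε j
      nlinarith
    · have h1 := yr_ge ε j
      have h2 := yr_nonneg ε j
      exact lt_of_pow_lt_pow_left₀ 2 h2 (by linarith)
  refine ⟨Aᶜ, hA.compl, ?_, ?_⟩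
  · rw [prob_compl_eq_one_sub hA, ENNReal.ofReal_sub _ (Real.exp_nonneg _), ENNReal.ofReal_one]
    exact tsub_le_tsub_left hPA 1
  · intro x hx t ht t' ht'
    have hx' : ∀ j : ℕ, bH μ s t ≤ yr ε j → bH μ s t' ≤ yr ε j →
        Psi x t t' - ∫ x', Psi x' t t' ∂(Plaw μ s) <
          7 / 1000 * yr ε j ^ 2 + 24400 * (ξ + j + 1) := by
      intro j h1 h2
      by_contra hcon
      push Not at hcon
      exact hx (Set.mem_iUnion.2 ⟨j, Set.mem_iUnion.2 ⟨⟨(t, t'), ht, ht', h1, h2⟩, hcon⟩⟩)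
    have hm := Psi_mean_le hs (hS t ht) (hS t' ht')
    have b1 : 0 ≤ bH μ s t := Real.sqrt_nonneg _
    have b2 : 0 ≤ bH μ s t' := Real.sqrt_nonneg _
    have hex : ∃ j : ℕ, max (bH μ s t) (bH μ s t') ≤ yr ε j := by
      obtain ⟨j, hj⟩ := pow_unbounded_of_one_lt (max (bH μ s t) (bH μ s t') ^ 2)
        (show (1 : ℝ) < 5 / 4 by norm_num)
      refine ⟨j, (pow_le_pow_iff_left₀ (le_max_of_le_left b1) (yr_nonneg _ _) two_ne_zero).1 ?_⟩
      rw [yr_sq]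
      have : (0 : ℝ) < (5 / 4 : ℝ) ^ j := by positivity
      nlinarith [sq_nonneg ε]
    have hspec := Nat.find_spec hex
    have hmin := fun m => @Nat.find_min _ _ hex m
    generalize Nat.find hex = j at hspec hmin
    have hj := hx' j ((le_max_left _ _).trans hspec) ((le_max_right _ _).trans hspec)
    rw [yr_sq] at hj
    cases j with
    | zero =>
      norm_num at hj ⊢
      nlinarith [sq_nonneg ε, sq_nonneg (bH μ s t), sq_nonneg (bH μ s t')]
    | succ k =>
      have hk := hmin k (Nat.lt_succ_self k)
      push Not at hk
      have hsq : yr ε k ^ 2 < bH μ s t ^ 2 + bH μ s t' ^ 2 := by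
        rcases lt_max_iff.1 hk with h | h
        · have := pow_lt_pow_left₀ h (yr_nonneg ε k) two_ne_zero
          nlinarith
        · have := pow_lt_pow_left₀ h (yr_nonneg ε k) two_ne_zero
          nlinarith
      rw [yr_sq] at hsq
      have hn := peel_num k
      have hp : (1 : ℝ) ≤ (5 / 4 : ℝ) ^ k := one_le_pow₀ (by norm_num)
      have hpe : 0 ≤ (5 / 4 : ℝ) ^ k * ε ^ 2 := by positivity
      rw [pow_succ] at hj
      push_cast at hj
      norm_num at hj hsq hn hpe ⊢
      nlinarith [sq_nonneg ε]

theorem extend_bar (hs : IsDensityT μ s) (ht : IsDensityT μ t) {u : ℕ → ∀ i, 𝒳 i → ℝ}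
    (hu : ∀ k, IsDensityT μ (u k))
    (h0 : Tendsto (fun k => bH μ t (u k)) atTop (nhds 0)) {a : ℕ → ℝ} {b R : ℝ}
    (ha : Tendsto a atTop (nhds b)) (hle : ∀ k, a k ≤ 4.01 * bH μ s (u k) ^ 2 + R) :
    b ≤ 4.01 * bH μ s t ^ 2 + R := by
  have step : ∀ η : ℝ, 0 < η → b ≤ 4.01 * ((1 + η) * bH μ s t ^ 2) + R := by
    intro η hη
    have hlim : Tendsto (fun k => 4.01 * ((1 + η) * bH μ s t ^ 2 + (1 + 1 / η) * bH μ t (u k) ^ 2)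
        + R) atTop (nhds (4.01 * ((1 + η) * bH μ s t ^ 2 + (1 + 1 / η) * 0 ^ 2) + R)) :=
      ((((h0.pow 2).const_mul _).const_add _).const_mul _).add_const _
    have := le_of_tendsto_of_tendsto' ha hlim (fun k => (hle k).trans (by
      have := bH_quasi hs ht (hu k) hη
      linarith))
    simpa using this
  have hlim : Tendsto (fun η : ℝ => 4.01 * ((1 + η) * bH μ s t ^ 2) + R) (nhdsWithin 0 (Set.Ioi 0))
      (nhds (4.01 * ((1 + 0) * bH μ s t ^ 2) + R)) := by
    refine Tendsto.mono_left ?_ nhdsWithin_le_nhds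
    exact Continuous.tendsto (by fun_prop) 0
  have := ge_of_tendsto hlim (by
    filter_upwards [self_mem_nhdsWithin] with η hη using step η hη)
  simpa using this

theorem Psi_meas_t (mS : MeasurableSpace (∀ i, 𝒳 i → ℝ)) (hBorel : borel (∀ i, 𝒳 i → ℝ) ≤ mS)
    (x : ∀ i, 𝒳 i) (t' : ∀ i, 𝒳 i → ℝ) :
    @Measurable _ _ mS _ (fun t : ∀ i, 𝒳 i → ℝ => Psi x t t') := by
  have hev : ∀ i, @Measurable _ _ mS _ (fun t : ∀ i, 𝒳 i → ℝ => t i (x i)) := by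
    intro i
    have hcont : Continuous (fun t : ∀ i, 𝒳 i → ℝ => t i (x i)) := by fun_prop
    have : @Measurable _ _ (borel (∀ i, 𝒳 i → ℝ)) (borel ℝ)
      (fun t : ∀ i, 𝒳 i → ℝ => t i (x i)) := hcont.borel_measurable
    rw [← BorelSpace.measurable_eq (α := ℝ)] at this
    exact this.mono hBorel le_rfl
  unfold Psi
  refine Finset.measurable_fun_sum _ fun i _ => ?_
  exact psiR_measurable.comp ((hev i).prodMk measurable_const)

end Final2

theorem statement_1
    {n : ℕ} {𝒳 : Fin n → Type*} [∀ i, MeasurableSpace (𝒳 i)]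
    (μ : ∀ i, Measure (𝒳 i)) [∀ i, SigmaFinite (μ i)]
    [mS : MeasurableSpace (∀ i, 𝒳 i → ℝ)]
    (Sbar S : Set (∀ i, 𝒳 i → ℝ))
    -- Assumption 1-(i): 𝒮 contains the Borel σ-algebra of the topology of pointwise convergence
    (hBorel : borel (∀ i, 𝒳 i → ℝ) ≤ mS)
    -- the model consists of density tuples
    (hmodel : ∀ t ∈ Sbar, IsDensityT μ t)
    -- Assumption 1-(ii): countable subset with the approximation property
    (hSsub : S ⊆ Sbar) (hScount : S.Countable)
    (hApprox : ∀ t ∈ Sbar, ∀ t' ∈ S, ∃ u : ℕ → ∀ i, 𝒳 i → ℝ,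
      (∀ k, u k ∈ S) ∧
      Tendsto (fun k => bH μ t (u k)) atTop (nhds 0) ∧
      ∀ x : ∀ i, 𝒳 i, Tendsto (fun k => Psi x (u k) t') atTop (nhds (Psi x t t')))
    -- the true density
    (s : ∀ i, 𝒳 i → ℝ) (hs : IsDensityT μ s)
    (ξ : ℝ) (hξ : 0 < ξ) :
    ∃ Ω : Set (∀ i, 𝒳 i), MeasurableSet Ω ∧
      ENNReal.ofReal (1 - Real.exp (-ξ)) ≤ Plaw μ s Ω ∧
      ∀ x ∈ Ω,
        (∀ t' ∈ S, @Measurable ↥Sbar ℝ (mS.comap Subtype.val) _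
          fun t : ↥Sbar => Psi x (t : ∀ i, 𝒳 i → ℝ) t') ∧
        ∀ t ∈ Sbar, ∀ t' ∈ S,
          Psi x t t' ≤ 4.01 * bH μ s t ^ 2 - 0.365 * bH μ s t' ^ 2
            + 16 / 1000 * epsS μ s S ^ 2 + 70000 * (ξ + 2.4) := by
  obtain ⟨Ω, hΩ, hP, hmain⟩ := main_S (μ := μ) hs (fun t ht => hmodel t (hSsub ht)) hScount hξ
  refine ⟨Ω, hΩ, hP, fun x hx => ⟨fun t' _ => ?_, fun t ht t' ht' => ?_⟩⟩
  · exact (Psi_meas_t mS hBorel x t').comp (comap_measurable _)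
  · obtain ⟨u, huS, hu0, huP⟩ := hApprox t ht t' ht'
    have := extend_bar (R := - 0.365 * bH μ s t' ^ 2
            + 16 / 1000 * epsS μ s S ^ 2 + 70000 * (ξ + 2.4)) hs (hmodel t ht)
      (fun k => hmodel _ (hSsub (huS k))) hu0 (huP x)
      (fun k => by
        have := hmain x hx (u k) (huS k) t' ht'
        linarith)
    linarith

end
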